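/- arXiv:1702.08698 — 3 statements merged into one kernel-verified Lean document; each statement's English description precedes it below -/
import Mathlib

section
/- Let f satisfy Condition B with constant K, let φ be a branching mechanism satisfying Grey's condition, and let (Q_t)_{t≥0} be the transition semigroup of the CB-process with branching mechanism φ. Fix t ≥ 0 and suppose that ∫_{[0,∞)} f(z) Q_t(x₀,dz) < ∞ for some x₀ > 0. Then for every probability measure μ on [0,∞) (the law of the initial state X_0), one has ∫_{[0,∞)} ∫_{[0,∞)} f(y) Q_t(x,dy) μ(dx) < ∞ if and only if ∫_{[0,∞)} f(x) μ(dx) < ∞. -/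
open MeasureTheory Set Filter

noncomputable section

/-- A positive continuous function on `[0,∞)` satisfying Condition A:
there exist `c ≥ 0` and `K > 0` such that `f` is convex on `[c,∞)`,
`f (x*y) ≤ K * f x * f y` for `x, y ∈ [c,∞)`, and `f` is bounded on `[0,c)`. -/
def ConditionA (f : ℝ → ℝ) : Prop :=
  ContinuousOn f (Set.Ici 0) ∧ (∀ x, 0 ≤ x → 0 < f x) ∧
  ∃ c, 0 ≤ c ∧ ∃ K, 0 < K ∧
    ConvexOn ℝ (Set.Ici c) f ∧
    (∀ x y, c ≤ x → c ≤ y → f (x * y) ≤ K * f x * f y) ∧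
    ∃ M, ∀ x, 0 ≤ x → x < c → f x ≤ M

/-- Condition B with constant `K`: `f` is convex and nondecreasing on `[0,∞)`,
submultiplicative up to the constant `K`, and `f > 1` on `[0,∞)`. -/
def ConditionB (f : ℝ → ℝ) (K : ℝ) : Prop :=
  0 < K ∧ ConvexOn ℝ (Set.Ici 0) f ∧ MonotoneOn f (Set.Ici 0) ∧
  (∀ x y, 0 ≤ x → 0 ≤ y → f (x * y) ≤ K * f x * f y) ∧
  (∀ x, 0 ≤ x → 1 < f x)

/-- `φ` is a branching mechanism with parameters `β ∈ ℝ`, `σ ≥ 0` and Lévy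
measure `m` (a σ-finite measure carried by `(0,∞)` with `∫ 1 ∧ z² m(dz) < ∞`):
`φ(λ) = βλ + σ²λ²/2 + ∫ (e^{-zλ} - 1 + zλ 1_{z ≤ 1}) m(dz)`. -/
structure IsBranchingMechanism (φ : ℝ → ℝ) (β σ : ℝ) (m : Measure ℝ) : Prop where
  sigma_nonneg : 0 ≤ σ
  sigmaFinite : SigmaFinite m
  carrier : m (Set.Iic 0) = 0
  levy_finite : ∫⁻ z, ENNReal.ofReal (min 1 (z ^ 2)) ∂m < ⊤
  form : ∀ l, 0 ≤ l →
    φ l = β * l + σ ^ 2 * l ^ 2 / 2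
      + ∫ z, (Real.exp (-(z * l)) - 1 + (if z ≤ 1 then z * l else 0)) ∂m

/-- Grey's condition: `∫_{0+} φ(λ)⁻¹ dλ = ∞`, i.e. `φ⁻¹` fails to be
integrable on every right neighbourhood of `0`. -/
def GreyCondition (φ : ℝ → ℝ) : Prop :=
  ∀ ε, 0 < ε → ¬ IntegrableOn (fun l => (φ l)⁻¹) (Set.Ioo 0 ε) volume

/-- `v t l` is the nonnegative solution of `v_t(λ) = λ - ∫_0^t φ(v_s(λ)) ds`. -/
def IsCumulant (φ : ℝ → ℝ) (v : ℝ → ℝ → ℝ) : Prop :=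
  ∀ l, 0 ≤ l → ∀ t, 0 ≤ t →
    0 ≤ v t l ∧ v t l = l - ∫ s in (0:ℝ)..t, φ (v s l)

/-- `(Q t)_{t ≥ 0}` is the transition semigroup of the CB-process with cumulant
`v`: each `Q t x` is a probability measure on `[0,∞)` with Laplace transform
`∫ e^{-λ y} Q_t(x, dy) = e^{-x v_t(λ)}`. -/
def IsCBSemigroup (v : ℝ → ℝ → ℝ) (Q : ℝ → ℝ → Measure ℝ) : Prop :=
  ∀ t x, 0 ≤ t → 0 ≤ x →
    IsProbabilityMeasure (Q t x) ∧ Q t x (Set.Iio 0) = 0 ∧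
    ∀ l, 0 ≤ l → ∫ y, Real.exp (-(l * y)) ∂(Q t x) = Real.exp (-(x * v t l))

/-- `ψ` is an immigration mechanism with drift `h ≥ 0` and immigration measure
`ν` (a σ-finite measure carried by `(0,∞)` with `∫ 1 ∧ z ν(dz) < ∞`):
`ψ(λ) = hλ + ∫ (1 - e^{-λz}) ν(dz)`. -/
structure IsImmigrationMechanism (ψ : ℝ → ℝ) (h : ℝ) (ν : Measure ℝ) : Prop where
  h_nonneg : 0 ≤ h
  sigmaFinite : SigmaFinite ν
  carrier : ν (Set.Iic 0) = 0
  levy_finite : ∫⁻ z, ENNReal.ofReal (min 1 z) ∂ν < ⊤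
  form : ∀ l, 0 ≤ l → ψ l = h * l + ∫ z, (1 - Real.exp (-(l * z))) ∂ν

/-- `(Q^γ t)_{t ≥ 0}` is the transition semigroup of the CBI-process with
cumulant `v` and immigration mechanism `ψ`: each `Qγ t x` is a probability
measure on `[0,∞)` with Laplace transform
`∫ e^{-λ y} Q^γ_t(x, dy) = exp(-x v_t(λ) - ∫_0^t ψ(v_s(λ)) ds)`. -/
def IsCBISemigroup (v : ℝ → ℝ → ℝ) (ψ : ℝ → ℝ) (Qγ : ℝ → ℝ → Measure ℝ) : Prop :=
  ∀ t x, 0 ≤ t → 0 ≤ x →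
    IsProbabilityMeasure (Qγ t x) ∧ Qγ t x (Set.Iio 0) = 0 ∧
    ∀ l, 0 ≤ l →
      ∫ y, Real.exp (-(l * y)) ∂(Qγ t x)
        = Real.exp (-(x * v t l) - ∫ s in (0:ℝ)..t, ψ (v s l))

open scoped NNReal BoundedContinuousFunction

def expBCF : ℝ≥0 →ᵇ ℝ :=
  BoundedContinuousFunction.ofNormedAddCommGroup (fun y : ℝ≥0 => Real.exp (-(y:ℝ)))
    (by fun_prop) 1 (by intro y; rw [Real.norm_eq_abs, abs_of_pos (Real.exp_pos _)]; simp)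

lemma expBCF_apply (y : ℝ≥0) : expBCF y = Real.exp (-(y:ℝ)) := rfl

def expAlg : StarSubalgebra ℝ (ℝ≥0 →ᵇ ℝ) where
  toSubalgebra := (Polynomial.aeval (R := ℝ) expBCF).range
  star_mem' := by
    intro a ha
    have : star a = a := by ext; simp
    rw [this]; exact ha

lemma laplace_ext_nnreal (P P' : Measure ℝ≥0) [IsFiniteMeasure P] [IsFiniteMeasure P']
    (h : ∀ n : ℕ, ∫ y, Real.exp (-(n * (y:ℝ))) ∂P = ∫ y, Real.exp (-(n * (y:ℝ))) ∂P') : P = P' := by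
  apply ext_of_forall_mem_subalgebra_integral_eq_of_pseudoEMetric_complete_countable (𝕜 := ℝ)
    (A := expAlg)
  · intro x y hxy
    refine ⟨fun z => Real.exp (-(z:ℝ)), ?_, ?_⟩
    · refine ⟨(expBCF : C(ℝ≥0, ℝ)), ⟨expBCF, ?_, rfl⟩, rfl⟩
      exact ⟨Polynomial.X, by simp⟩
    · intro h
      apply hxy
      simpa using h
  · rintro g ⟨p, rfl⟩
    induction p using Polynomial.induction_on' with
    | add p q hp hq =>
      simp only [AlgHom.toRingHom_eq_coe, RingHom.coe_coe, map_add, BoundedContinuousFunction.coe_add, Pi.add_apply] at hp hq ⊢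
      rw [integral_add (BoundedContinuousFunction.integrable _ _) (BoundedContinuousFunction.integrable _ _),
       integral_add (BoundedContinuousFunction.integrable _ _) (BoundedContinuousFunction.integrable _ _), hp, hq]
    | monomial n a =>
      have : ∀ y : ℝ≥0, ((Polynomial.aeval (R := ℝ) expBCF) (Polynomial.monomial n a)) y
          = a * Real.exp (-(n * (y:ℝ))) := by
        intro y
        rw [Polynomial.aeval_monomial]
        simp only [BoundedContinuousFunction.coe_mul, Pi.mul_apply, BoundedContinuousFunction.algebraMap_apply,
          BoundedContinuousFunction.coe_pow, Pi.pow_apply, expBCF_apply, ← Real.exp_nat_mul]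
        simp
      simp only [AlgHom.toRingHom_eq_coe, RingHom.coe_coe, this]
      rw [integral_const_mul, integral_const_mul, h n]

lemma laplace_ext (P P' : Measure ℝ) [IsFiniteMeasure P] [IsFiniteMeasure P']
    (hP : P (Iio 0) = 0) (hP' : P' (Iio 0) = 0)
    (h : ∀ l : ℝ, 0 ≤ l → ∫ y, Real.exp (-(l * y)) ∂P = ∫ y, Real.exp (-(l * y)) ∂P') : P = P' := by
  have key : ∀ S : Measure ℝ, S (Iio 0) = 0 → ∀ᵐ y ∂S, 0 ≤ y := by
    intro S hR
    rw [ae_iff]; simpa [Iio] using hR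
  have back : ∀ S : Measure ℝ, S (Iio 0) = 0 →
      (S.map Real.toNNReal).map ((↑) : ℝ≥0 → ℝ) = S := by
    intro S hR
    rw [Measure.map_map (by fun_prop) (by fun_prop)]
    conv_rhs => rw [← Measure.map_id (μ := S)]
    apply Measure.map_congr
    filter_upwards [key S hR] with y hy
    simp [hy]
  have int : ∀ S : Measure ℝ, S (Iio 0) = 0 → ∀ n : ℕ,
      ∫ y, Real.exp (-(n * (y:ℝ))) ∂(S.map Real.toNNReal) = ∫ y, Real.exp (-(n * y)) ∂S := by
    intro S hR n
    rw [integral_map (by fun_prop) (by fun_prop)]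
    apply integral_congr_ae
    filter_upwards [key S hR] with y hy
    simp [hy]
  rw [← back P hP, ← back P' hP']
  congr 1
  apply laplace_ext_nnreal
  intro n
  rw [int P hP, int P' hP', h n (by positivity)]

/-- sum of independent pieces -/
lemma conv_pi {ι : Type*} [Fintype ι] (q : ℝ → Measure ℝ) (w : ℝ → ℝ)
    (hq : ∀ x, 0 ≤ x → IsProbabilityMeasure (q x) ∧ q x (Iio 0) = 0 ∧
      ∀ l, 0 ≤ l → ∫ y, Real.exp (-(l * y)) ∂(q x) = Real.exp (-(x * w l)))
    (x : ι → ℝ) (hx : ∀ i, 0 ≤ x i) :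
    q (∑ i, x i) = (Measure.pi (fun i => q (x i))).map (fun y => ∑ i, y i) := by
  have hs : 0 ≤ ∑ i, x i := Finset.sum_nonneg (fun i _ => hx i)
  have := fun i => (hq (x i) (hx i)).1
  have := (hq _ hs).1
  have hm : Measurable (fun y : ι → ℝ => ∑ i, y i) := by fun_prop
  have : IsProbabilityMeasure ((Measure.pi (fun i => q (x i))).map (fun y => ∑ i, y i)) :=
    Measure.isProbabilityMeasure_map hm.aemeasurable
  apply laplace_ext _ _ (hq _ hs).2.1
  · rw [Measure.map_apply hm measurableSet_Iio]
    have : ∀ᵐ y ∂(Measure.pi (fun i => q (x i))), ∀ i, 0 ≤ y i := by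
      rw [ae_all_iff]
      intro i
      have h0 : ∀ᵐ z ∂(q (x i)), 0 ≤ z := by
        rw [ae_iff]; simpa [Iio] using (hq (x i) (hx i)).2.1
      exact (measurePreserving_eval (fun i => q (x i)) i).quasiMeasurePreserving.ae h0
    have h2 : ∀ᵐ y ∂(Measure.pi (fun i => q (x i))), 0 ≤ ∑ i, y i := by
      filter_upwards [this] with y hy using Finset.sum_nonneg (fun i _ => hy i)
    rw [ae_iff] at h2
    simpa [Iio] using h2
  · intro l hl
    rw [(hq _ hs).2.2 l hl, integral_map hm.aemeasurable (by fun_prop)]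
    have : ∀ y : ι → ℝ, Real.exp (-(l * ∑ i, y i)) = ∏ i, Real.exp (-(l * y i)) := by
      intro y
      rw [← Real.exp_sum, Finset.mul_sum, Finset.sum_neg_distrib]
    simp_rw [this]
    rw [integral_fintype_prod_eq_prod (f := fun _ z => Real.exp (-(l * z)))]
    rw [Finset.prod_congr rfl (fun i _ => (hq (x i) (hx i)).2.2 l hl), ← Real.exp_sum,
      Finset.sum_neg_distrib, Finset.sum_mul]

lemma zero_of_gronwall (u : ℝ → ℝ) (t C : ℝ) (ht : 0 ≤ t) (hu : ContinuousOn u (Icc 0 t))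
    (h0 : ∀ s ∈ Icc 0 t, 0 ≤ u s)
    (hC : ∀ s ∈ Icc 0 t, u s ≤ C * ∫ r in (0:ℝ)..s, u r) : u t = 0 := by
  rcases ht.eq_or_lt with rfl | ht'
  · have := hC 0 (by simp); have := h0 0 (by simp); simp at *; linarith
  have hd : ∀ x ∈ Ico 0 t, HasDerivWithinAt (fun s => ∫ r in (0:ℝ)..s, u r) (u x) (Ici x) x := by
    intro x hx
    have hi : IntervalIntegrable u volume 0 x := by
      apply ContinuousOn.intervalIntegrable
      rw [uIcc_of_le hx.1]
      exact hu.mono (Icc_subset_Icc_right hx.2.le)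
    have hc : ContinuousWithinAt u (Ici x) x := by
      have := hu x ⟨hx.1, hx.2.le⟩
      have h2 := this.mono (Icc_subset_Icc_left hx.1)
      exact h2.mono_of_mem_nhdsWithin (Icc_mem_nhdsGE hx.2)
    refine intervalIntegral.integral_hasDerivWithinAt_right hi (s := Ici x) (t := Ioi x) ?_ (hc.mono Ioi_subset_Ici_self)
    refine ⟨Ioc x t, Ioc_mem_nhdsGT hx.2, ?_⟩
    exact (hu.mono (fun z hz => ⟨hx.1.trans hz.1.le, hz.2⟩)).aestronglyMeasurable measurableSet_Ioc
  have hcont : ContinuousOn (fun s => ∫ r in (0:ℝ)..s, u r) (Icc 0 t) := by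
    have := intervalIntegral.continuousOn_primitive_interval (f := u) (a := 0) (b := t) (μ := volume)
      (by rw [uIcc_of_le ht]; exact hu.integrableOn_Icc)
    rwa [uIcc_of_le ht] at this
  have hz := eq_zero_of_abs_deriv_le_mul_abs_self_of_eq_zero_right (K := C) hcont hd (by simp) (by
    intro x hx
    have hx' : x ∈ Icc 0 t := ⟨hx.1, hx.2.le⟩
    have hI : 0 ≤ ∫ r in (0:ℝ)..x, u r := intervalIntegral.integral_nonneg hx.1
      (fun r hr => h0 r ⟨hr.1, hr.2.trans hx.2.le⟩)
    rw [Real.norm_of_nonneg (h0 x hx'), Real.norm_of_nonneg hI]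
    exact hC x hx') t ⟨ht, le_rfl⟩
  have h1 := hC t ⟨ht, le_rfl⟩
  have h2 := h0 t ⟨ht, le_rfl⟩
  rw [hz] at h1
  linarith

lemma exp_neg_le_quad (a : ℝ) (ha : 0 ≤ a) : Real.exp (-a) - 1 + a ≤ a ^ 2 := by
  by_cases h : a ≤ 1
  · have := Real.abs_exp_sub_one_sub_id_le (x := -a) (by rw [abs_neg, abs_of_nonneg ha]; exact h)
    have := (abs_le.1 this).2
    nlinarith
  · have : Real.exp (-a) ≤ 1 := by simpa using ha
    nlinarith

lemma phi_bound {φ : ℝ → ℝ} {β σ : ℝ} {m : Measure ℝ} (hφ : IsBranchingMechanism φ β σ m)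
    (M : ℝ) : ∃ C, 0 ≤ C ∧ ∀ l, 0 ≤ l → l ≤ M → φ l ≤ C * l := by
  set I := ∫ z, min 1 (z ^ 2) ∂m with hI
  have hI0 : 0 ≤ I := integral_nonneg (fun z => by positivity)
  have hInt : Integrable (fun z : ℝ => min 1 (z ^ 2)) m := by
    refine ⟨by fun_prop, ?_⟩
    rw [hasFiniteIntegral_iff_ofReal (Eventually.of_forall (fun z => by positivity))]
    exact hφ.levy_finite
  refine ⟨|β| + σ ^ 2 * |M| / 2 + |M| * I, by positivity, ?_⟩
  intro l hl hlM
  rw [hφ.form l hl]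
  have hMM : l ≤ |M| := hlM.trans (le_abs_self M)
  have hb : ∫ z, (Real.exp (-(z * l)) - 1 + (if z ≤ 1 then z * l else 0)) ∂m ≤ l ^ 2 * I := by
    by_cases hi : Integrable (fun z => Real.exp (-(z * l)) - 1 + (if z ≤ 1 then z * l else 0)) m
    · rw [hI, ← integral_const_mul]
      apply integral_mono_ae hi (hInt.const_mul _)
      have hpos : ∀ᵐ z ∂m, 0 < z := by
        rw [ae_iff]; simpa [Iic] using hφ.carrier
      filter_upwards [hpos] with z hz
      have hzl : 0 ≤ z * l := by positivity
      by_cases h1 : z ≤ 1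
      · have h2 : min 1 (z ^ 2) = z ^ 2 := min_eq_right (by nlinarith)
        simp only [h1, if_true, h2]
        have := exp_neg_le_quad (z * l) hzl
        nlinarith
      · simp only [h1, if_false]
        have : Real.exp (-(z * l)) ≤ 1 := by simpa using hzl
        have : 0 ≤ l ^ 2 * min 1 (z ^ 2) := by positivity
        linarith
    · rw [integral_undef hi]; positivity
  have h1 : β * l ≤ |β| * l := mul_le_mul_of_nonneg_right (le_abs_self β) hl
  have h2 : l ^ 2 ≤ |M| * l := by nlinarith
  have h3 : σ ^ 2 * l ^ 2 ≤ σ ^ 2 * (|M| * l) := mul_le_mul_of_nonneg_left h2 (sq_nonneg σ)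
  have h4 : l ^ 2 * I ≤ |M| * l * I := mul_le_mul_of_nonneg_right h2 hI0
  nlinarith

lemma cumulant_pos {φ : ℝ → ℝ} {β σ : ℝ} {m : Measure ℝ} (hφ : IsBranchingMechanism φ β σ m)
    {v : ℝ → ℝ → ℝ} (hv : IsCumulant φ v) (t : ℝ) (ht : 0 ≤ t) (l : ℝ) (hl : 0 < l) :
    0 < v t l := by
  by_contra hneg
  have hvt : v t l = 0 := le_antisymm (not_lt.1 hneg) (hv l hl.le t ht).1
  have hii : IntervalIntegrable (fun s => φ (v s l)) volume 0 t := by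
    by_contra hni
    have := (hv l hl.le t ht).2
    rw [intervalIntegral.integral_undef hni] at this
    linarith
  have hvc : ContinuousOn (fun s => v s l) (Icc 0 t) := by
    have := intervalIntegral.continuousOn_primitive_interval' (f := fun s => φ (v s l)) hii
      left_mem_uIcc
    rw [uIcc_of_le ht] at this
    exact (continuousOn_const (c := l).sub this).congr (fun s hs => (hv l hl.le s hs.1).2)
  obtain ⟨M, hM⟩ := (isCompact_Icc.image_of_continuousOn hvc).bddAbove
  obtain ⟨C, hC0, hC⟩ := phi_bound hφ M
  have hle : ∀ s ∈ Icc 0 t, φ (v s l) ≤ C * v s l := fun s hs =>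
    hC _ (hv l hl.le s hs.1).1 (hM ⟨s, hs, rfl⟩)
  have hz := zero_of_gronwall (fun s => v (t - s) l) t C ht
    (hvc.comp (by fun_prop) (fun s hs => ⟨by linarith [hs.2], by linarith [hs.1]⟩))
    (fun s hs => (hv l hl.le (t - s) (by linarith [hs.2])).1) (by
      intro s hs
      have e1 := (hv l hl.le (t - s) (by linarith [hs.2])).2
      have e2 := (hv l hl.le t ht).2
      have hsub : Icc (t - s) t ⊆ Icc 0 t := Icc_subset_Icc_left (by linarith [hs.2])
      have hA : IntervalIntegrable (fun s => φ (v s l)) volume 0 (t - s) :=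
        hii.mono_set (by
          rw [uIcc_of_le ht, uIcc_of_le (by linarith [hs.2])]
          exact Icc_subset_Icc_right (by linarith [hs.1]))
      have hB : IntervalIntegrable (fun s => φ (v s l)) volume (t - s) t :=
        hii.mono_set (by
          rw [uIcc_of_le ht, uIcc_of_le (by linarith [hs.1])]
          exact hsub)
      have e3 := intervalIntegral.integral_add_adjacent_intervals hA hB
      have e4 : ∫ r in (t - s)..t, φ (v r l) ≤ ∫ r in (t - s)..t, C * v r l := by
        apply intervalIntegral.integral_mono_on (by linarith [hs.1]) hB
        · apply ContinuousOn.intervalIntegrable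
          rw [uIcc_of_le (by linarith [hs.1])]
          exact continuousOn_const.mul (hvc.mono hsub)
        · intro r hr
          exact hle r (hsub hr)
      rw [intervalIntegral.integral_const_mul] at e4
      have e5 : ∫ r in (0:ℝ)..s, v (t - r) l = ∫ r in (t - s)..t, v r l := by
        rw [intervalIntegral.integral_comp_sub_left (fun r => v r l) t]; simp
      rw [e5]
      linarith)
  simp only [sub_self] at hz
  have := (hv l hl.le 0 le_rfl).2
  simp at this
  linarith

/-- The Laplace-transform description of the laws `q x`. -/
def LapFam (q : ℝ → Measure ℝ) (w : ℝ → ℝ) : Prop :=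
  ∀ x, 0 ≤ x → IsProbabilityMeasure (q x) ∧ q x (Iio 0) = 0 ∧
      ∀ l, 0 ≤ l → ∫ y, Real.exp (-(l * y)) ∂(q x) = Real.exp (-(x * w l))

lemma ae_nonneg_of {P : Measure ℝ} (h : P (Iio 0) = 0) : ∀ᵐ z ∂P, 0 ≤ z := by
  rw [ae_iff]; simpa [Iio] using h

lemma pi_ae_nonneg {ι : Type*} [Fintype ι] {q : ℝ → Measure ℝ} {w : ℝ → ℝ} (hq : LapFam q w)
    (x : ι → ℝ) (hx : ∀ i, 0 ≤ x i) :
    ∀ᵐ y ∂(Measure.pi (fun i => q (x i))), ∀ i, 0 ≤ y i := by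
  have := fun i => (hq (x i) (hx i)).1
  rw [ae_all_iff]
  intro i
  exact (measurePreserving_eval (fun i => q (x i)) i).quasiMeasurePreserving.ae
    (ae_nonneg_of (hq (x i) (hx i)).2.1)

lemma moment_mono {f : ℝ → ℝ} {K : ℝ} (hf : ConditionB f K) (hfm : Measurable f)
    {q : ℝ → Measure ℝ} {w : ℝ → ℝ} (hq : LapFam q w) {x y : ℝ} (hx : 0 ≤ x) (hxy : x ≤ y) :
    ∫⁻ z, ENNReal.ofReal (f z) ∂(q x) ≤ ∫⁻ z, ENNReal.ofReal (f z) ∂(q y) := by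
  have hx2 : ∀ i, 0 ≤ (![x, y - x] : Fin 2 → ℝ) i := by
    intro i; fin_cases i <;> simp <;> linarith
  have := fun i => (hq _ (hx2 i)).1
  have hc := conv_pi q w hq ![x, y - x] hx2
  have e : ∑ i, (![x, y - x] : Fin 2 → ℝ) i = y := by simp
  rw [e] at hc
  rw [hc, lintegral_map (by fun_prop) (by fun_prop)]
  have hm := (measurePreserving_eval (fun i => q ((![x, y - x] : Fin 2 → ℝ) i)) 0).lintegral_comp
    (f := fun z => ENNReal.ofReal (f z)) (by fun_prop)
  have e0 : (![x, y - x] : Fin 2 → ℝ) 0 = x := rfl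
  rw [e0] at hm
  rw [← hm]
  apply lintegral_mono_ae
  filter_upwards [pi_ae_nonneg hq _ hx2] with z hz
  apply ENNReal.ofReal_le_ofReal
  have h0 := hz 0
  have h1 := hz 1
  apply hf.2.2.1 h0
  · simp only [Fin.sum_univ_two, mem_Ici]; linarith
  · simp only [Fin.sum_univ_two]; linarith

lemma moment_mul {f : ℝ → ℝ} {K : ℝ} (hf : ConditionB f K) (hfm : Measurable f)
    {q : ℝ → Measure ℝ} {w : ℝ → ℝ} (hq : LapFam q w) {x : ℝ} (hx : 0 ≤ x) (n : ℕ) (hn : 0 < n) :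
    ∫⁻ z, ENNReal.ofReal (f z) ∂(q (n * x)) ≤
      ENNReal.ofReal (K * f n) * ∫⁻ z, ENNReal.ofReal (f z) ∂(q x) := by
  obtain ⟨hK, hconv, hmono, hsub, hone⟩ := hf
  have := (hq x hx).1
  have hc := conv_pi q w hq (fun _ : Fin n => x) (fun _ => hx)
  have e : ∑ i : Fin n, x = n * x := by simp
  rw [e] at hc
  rw [hc, lintegral_map (by fun_prop) (by fun_prop)]
  have hn' : (0:ℝ) < n := by exact_mod_cast hn
  have hfn : 0 < f n := by linarith [hone n hn'.le]
  have step : ∫⁻ y, ENNReal.ofReal (f (∑ i, y i)) ∂(Measure.pi (fun _ : Fin n => q x)) ≤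
      ∫⁻ y, ∑ i, ENNReal.ofReal (K * f n * (n:ℝ)⁻¹) * ENNReal.ofReal (f (y i))
        ∂(Measure.pi (fun _ : Fin n => q x)) := by
    apply lintegral_mono_ae
    filter_upwards [pi_ae_nonneg hq (fun _ : Fin n => x) (fun _ => hx)] with y hy
    have hpos : ∀ i, 0 ≤ f (y i) := fun i => by linarith [hone _ (hy i)]
    simp_rw [← ENNReal.ofReal_mul (show 0 ≤ K * f n * (n:ℝ)⁻¹ by positivity)]
    rw [← ENNReal.ofReal_sum_of_nonneg (fun i _ => mul_nonneg (by positivity) (hpos i))]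
    apply ENNReal.ofReal_le_ofReal
    have hJ := hconv.map_sum_le (t := Finset.univ) (w := fun _ : Fin n => (n:ℝ)⁻¹) (p := y)
      (fun _ _ => by positivity) (by simp [hn'.ne']) (fun i _ => hy i)
    simp only [smul_eq_mul, ← Finset.mul_sum] at hJ
    have hS : 0 ≤ ∑ i, y i := Finset.sum_nonneg (fun i _ => hy i)
    have h2 := hsub n ((n:ℝ)⁻¹ * ∑ i, y i) hn'.le (by positivity)
    rw [mul_inv_cancel_left₀ hn'.ne'] at h2
    rw [← Finset.mul_sum]
    calc f (∑ i, y i) ≤ K * f n * f ((n:ℝ)⁻¹ * ∑ i, y i) := h2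
      _ ≤ K * f n * ((n:ℝ)⁻¹ * ∑ i, f (y i)) := mul_le_mul_of_nonneg_left hJ (by positivity)
      _ = _ := by ring
  refine step.trans (le_of_eq ?_)
  rw [lintegral_finsetSum _ (fun i _ => by fun_prop)]
  have : ∀ i : Fin n, ∫⁻ y, ENNReal.ofReal (K * f n * (n:ℝ)⁻¹) * ENNReal.ofReal (f (y i))
        ∂(Measure.pi (fun _ : Fin n => q x))
        = ENNReal.ofReal (K * f n * (n:ℝ)⁻¹) * ∫⁻ z, ENNReal.ofReal (f z) ∂(q x) := by
    intro i
    rw [lintegral_const_mul _ (by fun_prop)]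
    congr 1
    exact (measurePreserving_eval (fun _ : Fin n => q x) i).lintegral_comp
      (f := fun z => ENNReal.ofReal (f z)) (by fun_prop)
  simp_rw [this]
  rw [Finset.sum_const, Finset.card_univ, Fintype.card_fin, nsmul_eq_mul, ← mul_assoc]
  congr 1
  rw [← ENNReal.ofReal_natCast, ← ENNReal.ofReal_mul hn'.le]
  congr 1
  field_simp

lemma moment_upper {f : ℝ → ℝ} {K : ℝ} (hf : ConditionB f K) (hfm : Measurable f)
    {q : ℝ → Measure ℝ} {w : ℝ → ℝ} (hq : LapFam q w) {x₀ : ℝ} (hx₀ : 0 < x₀) :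
    ∃ C : ℝ, ∀ x, 0 ≤ x → ∫⁻ z, ENNReal.ofReal (f z) ∂(q x) ≤
      (ENNReal.ofReal C * ∫⁻ z, ENNReal.ofReal (f z) ∂(q x₀)) * ENNReal.ofReal (f x) := by
  have hf' := hf
  obtain ⟨hK, hconv, hmono, hsub, hone⟩ := hf
  have hpos : ∀ x, 0 ≤ x → 0 < f x := fun x hx => by linarith [hone x hx]
  set a := 1 + x₀⁻¹ with ha
  have ha0 : 0 < a := by positivity
  have hfa := hpos a ha0.le
  have hf2 := hpos 2 (by norm_num)
  refine ⟨K * (K * f a * (K * f 2 + f 4)), ?_⟩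
  intro x hx
  have hfx := hpos x hx
  set n := ⌈x / x₀⌉₊ + 1 with hn
  have hn0 : 0 < n := Nat.succ_pos _
  have hn1 : (0:ℝ) < n := by exact_mod_cast hn0
  have hxn : x ≤ n * x₀ := by
    have h1 := Nat.le_ceil (x / x₀)
    have h2 : x / x₀ ≤ n := by rw [hn]; push_cast; linarith
    rwa [div_le_iff₀ hx₀] at h2
  have hnle : (n:ℝ) ≤ a * (x + 2) := by
    have h1 := Nat.ceil_lt_add_one (show 0 ≤ x / x₀ by positivity)
    have h3 : (n:ℝ) ≤ x / x₀ + 2 := by rw [hn]; push_cast; linarith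
    have h4 : a * (x + 2) = x + 2 + x / x₀ + 2 * x₀⁻¹ := by rw [ha]; field_simp; ring
    have : 0 < x₀⁻¹ := by positivity
    rw [h4]; linarith
  have hf4 := hpos 4 (by norm_num)
  have hx2 : f (x + 2) ≤ (K * f 2 + f 4) * f x := by
    rcases le_total 2 x with h | h
    · have h1 : f (x + 2) ≤ f (2 * x) :=
        hmono (by simp only [mem_Ici]; linarith) (by simp only [mem_Ici]; linarith) (by linarith)
      have h2 := hsub 2 x (by norm_num) hx
      have h3 : 0 < f 4 * f x := by positivity
      linarith
    · have h1 : f (x + 2) ≤ f 4 :=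
        hmono (by simp only [mem_Ici]; linarith) (by simp only [mem_Ici]; linarith) (by linarith)
      have h2 : f 4 * 1 ≤ f 4 * f x := mul_le_mul_of_nonneg_left (hone x hx).le hf4.le
      have h3 : 0 < K * f 2 * f x := by positivity
      linarith
  have hfn : f n ≤ K * f a * ((K * f 2 + f 4) * f x) := by
    have h1 : f n ≤ f (a * (x + 2)) := hmono hn1.le (hn1.le.trans hnle) hnle
    have h2 := hsub a (x + 2) ha0.le (by linarith)
    have h3 : K * f a * f (x + 2) ≤ K * f a * ((K * f 2 + f 4) * f x) :=
      mul_le_mul_of_nonneg_left hx2 (by positivity)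
    linarith
  calc ∫⁻ z, ENNReal.ofReal (f z) ∂(q x)
      ≤ ∫⁻ z, ENNReal.ofReal (f z) ∂(q (n * x₀)) := moment_mono hf' hfm hq hx hxn
    _ ≤ ENNReal.ofReal (K * f n) * ∫⁻ z, ENNReal.ofReal (f z) ∂(q x₀) :=
        moment_mul hf' hfm hq hx₀.le n hn0
    _ ≤ ENNReal.ofReal (K * (K * f a * (K * f 2 + f 4)) * f x) *
          ∫⁻ z, ENNReal.ofReal (f z) ∂(q x₀) := by
        refine mul_le_mul_left (ENNReal.ofReal_le_ofReal ?_) _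
        calc K * f n ≤ K * (K * f a * ((K * f 2 + f 4) * f x)) :=
              mul_le_mul_of_nonneg_left hfn hK.le
          _ = _ := by ring
    _ = _ := by
        rw [ENNReal.ofReal_mul (by positivity)]
        ring

lemma moment_lower {f : ℝ → ℝ} {K : ℝ} (hf : ConditionB f K)
    {q : ℝ → Measure ℝ} {w : ℝ → ℝ} (hq : LapFam q w) (hw : 0 < w 1) :
    ∃ C : ℝ, ∀ x, 0 ≤ x → ENNReal.ofReal (f x) ≤
      ENNReal.ofReal C * ∫⁻ z, ENNReal.ofReal (f z) ∂(q x) := by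
  obtain ⟨hK, hconv, hmono, hsub, hone⟩ := hf
  have hpos : ∀ x, 0 ≤ x → 0 < f x := fun x hx => by linarith [hone x hx]
  set a := w 1 / 2 with ha
  have ha0 : 0 < a := by positivity
  set p := 1 - Real.exp (-a) with hp
  have hp0 : 0 < p := by
    have : Real.exp (-a) < 1 := by simpa using ha0
    linarith
  have hf1 := hpos 1 (by norm_num)
  have hfa := hpos a⁻¹ (by positivity)
  refine ⟨f 1 + K * f a⁻¹ * p⁻¹, ?_⟩
  intro x hx
  have := (hq x hx).1
  have hae := ae_nonneg_of (hq x hx).2.1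
  rcases le_total x 1 with h | h
  · have h1 : (1:ENNReal) ≤ ∫⁻ z, ENNReal.ofReal (f z) ∂(q x) := by
      calc (1:ENNReal) = ∫⁻ z, 1 ∂(q x) := by simp
        _ ≤ _ := by
          apply lintegral_mono_ae
          filter_upwards [hae] with z hz
          rw [← ENNReal.ofReal_one]
          exact ENNReal.ofReal_le_ofReal (hone z hz).le
    calc ENNReal.ofReal (f x) ≤ ENNReal.ofReal (f 1 + K * f a⁻¹ * p⁻¹) * 1 := by
          rw [mul_one]
          apply ENNReal.ofReal_le_ofReal
          have : f x ≤ f 1 := hmono hx (by simp) h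
          have : 0 < K * f a⁻¹ * p⁻¹ := by positivity
          linarith
      _ ≤ _ := by gcongr
  · have hax : 0 ≤ a * x := by positivity
    -- Chernoff bound
    have hInt : Integrable (fun y => Real.exp (-(1 * y))) (q x) := by
      apply Integrable.of_bound (C := 1) (by fun_prop)
      filter_upwards [hae] with z hz
      rw [Real.norm_of_nonneg (Real.exp_pos _).le]
      simpa using hz
    have hM := mul_meas_ge_le_integral_of_nonneg
      (Eventually.of_forall (fun y => (Real.exp_pos (-(1 * y))).le)) hInt (Real.exp (-(a * x)))
    rw [(hq x hx).2.2 1 zero_le_one] at hM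
    have hset : {y : ℝ | Real.exp (-(a * x)) ≤ Real.exp (-(1 * y))} = Iic (a * x) := by
      ext y; simp
    rw [hset] at hM
    have hc : (q x).real (Iic (a * x)) ≤ Real.exp (-a) := by
      have h1 : Real.exp (-(x * w 1)) ≤ Real.exp (-(a * x)) * Real.exp (-a) := by
        rw [← Real.exp_add]
        apply Real.exp_le_exp.2
        have : w 1 = 2 * a := by rw [ha]; ring
        rw [this]
        nlinarith
      exact le_of_mul_le_mul_left (hM.trans h1) (Real.exp_pos _)
    have hpq : ENNReal.ofReal p ≤ q x (Ioi (a * x)) := by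
      have h1 : (q x).real (Ioi (a * x)) = 1 - (q x).real (Iic (a * x)) := by
        rw [← compl_Iic, probReal_compl_eq_one_sub measurableSet_Iic]
      rw [← ofReal_measureReal]
      apply ENNReal.ofReal_le_ofReal
      rw [h1]; linarith
    have h2 : ENNReal.ofReal (f (a * x)) * ENNReal.ofReal p ≤
        ∫⁻ z, ENNReal.ofReal (f z) ∂(q x) := by
      calc ENNReal.ofReal (f (a * x)) * ENNReal.ofReal p
          ≤ ENNReal.ofReal (f (a * x)) * q x (Ioi (a * x)) := by gcongr
        _ = ∫⁻ z in Ioi (a * x), ENNReal.ofReal (f (a * x)) ∂(q x) := by simp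
        _ ≤ ∫⁻ z in Ioi (a * x), ENNReal.ofReal (f z) ∂(q x) := by
          apply setLIntegral_mono' measurableSet_Ioi
          intro z hz
          exact ENNReal.ofReal_le_ofReal (hmono hax (hax.trans (le_of_lt hz)) (le_of_lt hz))
        _ ≤ _ := setLIntegral_le_lintegral _ _
    have h3 : f x ≤ K * f a⁻¹ * f (a * x) := by
      have := hsub a⁻¹ (a * x) (by positivity) hax
      rwa [inv_mul_cancel_left₀ ha0.ne'] at this
    have hfax := hpos _ hax
    calc ENNReal.ofReal (f x)
        ≤ ENNReal.ofReal ((f 1 + K * f a⁻¹ * p⁻¹) * (f (a * x) * p)) := by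
          apply ENNReal.ofReal_le_ofReal
          have e : (f 1 + K * f a⁻¹ * p⁻¹) * (f (a * x) * p) =
            f 1 * (f (a * x) * p) + K * f a⁻¹ * f (a * x) := by field_simp
          have : 0 < f 1 * (f (a * x) * p) := by positivity
          rw [e]; linarith
      _ = ENNReal.ofReal (f 1 + K * f a⁻¹ * p⁻¹) *
            (ENNReal.ofReal (f (a * x)) * ENNReal.ofReal p) := by
          rw [ENNReal.ofReal_mul (by positivity), ENNReal.ofReal_mul hfax.le]
      _ ≤ _ := by gcongr

lemma conditionB_ext {f : ℝ → ℝ} {K : ℝ} (hf : ConditionB f K) :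
    ConditionB (fun y => f (max y 0)) K ∧ Measurable (fun y => f (max y 0)) := by
  obtain ⟨hK, hconv, hmono, hsub, hone⟩ := hf
  have heq : EqOn f (fun y => f (max y 0)) (Ici 0) := fun y hy => by
    simp only [max_eq_left (mem_Ici.1 hy)]
  refine ⟨⟨hK, hconv.congr heq, hmono.congr heq, ?_, fun x _ => hone _ (le_max_right _ _)⟩, ?_⟩
  · intro x y hx hy
    simp only [max_eq_left hx, max_eq_left hy, max_eq_left (mul_nonneg hx hy)]
    exact hsub x y hx hy
  · apply Monotone.measurable
    intro x y hxy
    exact hmono (mem_Ici.2 (le_max_right _ _)) (mem_Ici.2 (le_max_right _ _)) (max_le_max_right 0 hxy)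

lemma lintegral_ext_eq (f : ℝ → ℝ) {P : Measure ℝ} (hP : P (Iio 0) = 0) :
    ∫⁻ z, ENNReal.ofReal (f z) ∂P = ∫⁻ z, ENNReal.ofReal (f (max z 0)) ∂P := by
  apply lintegral_congr_ae
  filter_upwards [ae_nonneg_of hP] with z hz
  rw [max_eq_left hz]

/-- Proposition 3.6: fix `t ≥ 0` and suppose `∫ f dQ_t(x₀,·) < ∞` for some
`x₀ > 0`. Then for a CB-process with arbitrary initial law `μ`, the `f`-moment
at time `t` is finite iff the `f`-moment of `μ` is finite. -/
theorem cb_f_moment_iff_initial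
    (f : ℝ → ℝ) (K : ℝ) (hf : ConditionB f K)
    (φ : ℝ → ℝ) (β σ : ℝ) (m : Measure ℝ)
    (hφ : IsBranchingMechanism φ β σ m) (hGrey : GreyCondition φ)
    (v : ℝ → ℝ → ℝ) (hv : IsCumulant φ v)
    (Q : ℝ → ℝ → Measure ℝ) (hQ : IsCBSemigroup v Q)
    (t : ℝ) (ht : 0 ≤ t) (x₀ : ℝ) (hx₀ : 0 < x₀)
    (hfin : (∫⁻ z, ENNReal.ofReal (f z) ∂(Q t x₀)) < ⊤)
    (μ : Measure ℝ) (hμ : IsProbabilityMeasure μ) (hμ0 : μ (Set.Iio 0) = 0) :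
    (∫⁻ x, (∫⁻ y, ENNReal.ofReal (f y) ∂(Q t x)) ∂μ) < ⊤ ↔
      (∫⁻ x, ENNReal.ofReal (f x) ∂μ) < ⊤ := by
  obtain ⟨hF, hFm⟩ := conditionB_ext hf
  have hq : LapFam (Q t) (v t) := fun x hx => hQ t x ht hx
  rw [lintegral_ext_eq f (hq x₀ hx₀.le).2.1] at hfin
  obtain ⟨C₁, hC₁⟩ := moment_upper hF hFm hq hx₀
  obtain ⟨C₂, hC₂⟩ := moment_lower hF hq (cumulant_pos hφ hv t ht 1 one_pos)
  have hae := ae_nonneg_of hμ0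
  rw [lintegral_ext_eq f hμ0]
  have hE : ∫⁻ x, (∫⁻ y, ENNReal.ofReal (f y) ∂(Q t x)) ∂μ
      = ∫⁻ x, (∫⁻ y, ENNReal.ofReal (f (max y 0)) ∂(Q t x)) ∂μ := by
    apply lintegral_congr_ae
    filter_upwards [hae] with x hx
    exact lintegral_ext_eq f (hq x hx).2.1
  rw [hE]
  constructor
  · intro h
    refine lt_of_le_of_lt (lintegral_mono_ae (hae.mono fun x hx => hC₂ x hx)) ?_
    rw [lintegral_const_mul' _ _ ENNReal.ofReal_ne_top]
    exact ENNReal.mul_lt_top ENNReal.ofReal_lt_top h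
  · intro h
    refine lt_of_le_of_lt (lintegral_mono_ae (hae.mono fun x hx => hC₁ x hx)) ?_
    have hfc := ENNReal.mul_lt_top (ENNReal.ofReal_lt_top (r := C₁)) hfin
    rw [lintegral_const_mul' _ _ hfc.ne]
    exact ENNReal.mul_lt_top hfc h
end
end

section
/- Let f satisfy Condition B with constant K, let φ be a branching mechanism satisfying Grey's condition whose Lévy measure m satisfies ∫_{(1,∞)} zⁿ m(dz) < ∞ for every integer n ≥ 1, and let (Q_t)_{t≥0} be the transition semigroup of the CB-process with branching mechanism φ. Then for every x > 0, the function t ↦ ∫_{[0,∞)} f(z) Q_t(x,dz) is finite for every t ≥ 0 and locally bounded on [0,∞) (i.e., bounded on every compact interval [0,T]). -/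
open MeasureTheory Set Filter

noncomputable section

/-- Evaluation of a polynomial in the second variable with continuous coefficients in time. -/
def pev (p : Polynomial C(ℝ, ℝ)) (t l : ℝ) : ℝ :=
  p.eval₂ ((ContinuousMap.evalAlgHom ℝ ℝ t : C(ℝ, ℝ) →ₐ[ℝ] ℝ) : C(ℝ, ℝ) →+* ℝ) l

lemma pev_sum (p : Polynomial C(ℝ, ℝ)) (t l : ℝ) :
    pev p t l = ∑ i ∈ Finset.range (p.natDegree + 1), p.coeff i t * l ^ i := by
  unfold pev
  rw [Polynomial.eval₂_eq_sum_range]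
  rfl

lemma pev_add (p q : Polynomial C(ℝ, ℝ)) (t l : ℝ) :
    pev (p + q) t l = pev p t l + pev q t l := by
  unfold pev; rw [Polynomial.eval₂_add]

lemma pev_mul (p q : Polynomial C(ℝ, ℝ)) (t l : ℝ) :
    pev (p * q) t l = pev p t l * pev q t l := by
  unfold pev; rw [Polynomial.eval₂_mul]

lemma pev_C (a : C(ℝ, ℝ)) (t l : ℝ) : pev (Polynomial.C a) t l = a t := by
  unfold pev; rw [Polynomial.eval₂_C]; rfl

lemma pev_X (t l : ℝ) : pev Polynomial.X t l = l := by
  unfold pev; rw [Polynomial.eval₂_X]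

lemma pev_zero (t l : ℝ) : pev 0 t l = 0 := by
  unfold pev; rw [Polynomial.eval₂_zero]

lemma pev_finsetSum {ι : Type*} (s : Finset ι) (p : ι → Polynomial C(ℝ, ℝ)) (t l : ℝ) :
    pev (∑ i ∈ s, p i) t l = ∑ i ∈ s, pev (p i) t l := by
  unfold pev; rw [Polynomial.eval₂_finsetSum]

lemma pev_continuous (p : Polynomial C(ℝ, ℝ)) : Continuous fun z : ℝ × ℝ => pev p z.1 z.2 := by
  simp only [pev_sum]
  fun_prop

lemma pev_bdd (p : Polynomial C(ℝ, ℝ)) (T : ℝ) :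
    ∃ B, 0 ≤ B ∧ ∀ t ∈ Icc (0:ℝ) T, ∀ l ∈ Ioc (0:ℝ) 1, |pev p t l| ≤ B := by
  obtain ⟨B, hB⟩ := ((isCompact_Icc (a := (0:ℝ)) (b := T)).prod
    (isCompact_Icc (a := (0:ℝ)) (b := 1))).exists_bound_of_continuousOn
      (pev_continuous p).continuousOn
  refine ⟨max B 0, le_max_right _ _, fun t ht l hl => ?_⟩
  exact (hB (t, l) ⟨ht, ⟨hl.1.le, hl.2⟩⟩).trans (le_max_left _ _)

/-- `g` has an expansion of order `j` in its second variable at zero,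
uniformly for times in `[0,T]`. -/
def Ex (T : ℝ) (j : ℕ) (g : ℝ → ℝ → ℝ) : Prop :=
  ∃ p : Polynomial C(ℝ, ℝ), ∃ C : ℝ, 0 ≤ C ∧ ∀ t ∈ Icc (0:ℝ) T, ∀ l ∈ Ioc (0:ℝ) 1,
    |g t l - pev p t l| ≤ C * l ^ j

lemma Ex.congr {T : ℝ} {j : ℕ} {g h : ℝ → ℝ → ℝ} (hg : Ex T j g)
    (e : ∀ t ∈ Icc (0:ℝ) T, ∀ l ∈ Ioc (0:ℝ) 1, h t l = g t l) : Ex T j h := by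
  obtain ⟨p, C, hC, h⟩ := hg
  exact ⟨p, C, hC, fun t ht l hl => by rw [e t ht l hl]; exact h t ht l hl⟩

lemma Ex.bigO {T : ℝ} {j : ℕ} {g : ℝ → ℝ → ℝ} (C : ℝ)
    (h : ∀ t ∈ Icc (0:ℝ) T, ∀ l ∈ Ioc (0:ℝ) 1, |g t l| ≤ C * l ^ j) : Ex T j g := by
  refine ⟨0, max C 0, le_max_right _ _, fun t ht l hl => ?_⟩
  rw [pev_zero, sub_zero]
  refine (h t ht l hl).trans ?_
  have := hl.1.le
  gcongr
  exact le_max_left _ _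

lemma Ex.time {T : ℝ} {j : ℕ} (a : ℝ → ℝ) (ha : Continuous a) : Ex T j fun t _ => a t := by
  refine ⟨Polynomial.C ⟨a, ha⟩, 0, le_rfl, fun t ht l hl => ?_⟩
  rw [pev_C]; simp

lemma Ex.const {T : ℝ} {j : ℕ} (a : ℝ) : Ex T j fun _ _ => a := Ex.time _ continuous_const

lemma Ex.var {T : ℝ} {j : ℕ} : Ex T j fun _ l => l := by
  refine ⟨Polynomial.X, 0, le_rfl, fun t ht l hl => ?_⟩
  rw [pev_X]; simp

lemma Ex.add {T : ℝ} {j : ℕ} {g h : ℝ → ℝ → ℝ} (hg : Ex T j g) (hh : Ex T j h) :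
    Ex T j fun t l => g t l + h t l := by
  obtain ⟨p, C, hC, hp⟩ := hg
  obtain ⟨q, D, hD, hq⟩ := hh
  refine ⟨p + q, C + D, by positivity, fun t ht l hl => ?_⟩
  rw [pev_add]
  have h1 := hp t ht l hl
  have h2 := hq t ht l hl
  calc _ = |(g t l - pev p t l) + (h t l - pev q t l)| := by congr 1; ring
    _ ≤ _ := abs_add_le _ _
    _ ≤ _ := by linarith

lemma Ex.mul {T : ℝ} {j : ℕ} {g h : ℝ → ℝ → ℝ} (hg : Ex T j g) (hh : Ex T j h) :
    Ex T j fun t l => g t l * h t l := by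
  obtain ⟨p, C, hC, hp⟩ := hg
  obtain ⟨q, D, hD, hq⟩ := hh
  obtain ⟨P, hP0, hP⟩ := pev_bdd p T
  obtain ⟨B, hB0, hB⟩ := pev_bdd q T
  refine ⟨p * q, C * (B + D) + P * D, by positivity, fun t ht l hl => ?_⟩
  rw [pev_mul]
  have h1 := hp t ht l hl
  have h2 := hq t ht l hl
  have h3 := hP t ht l hl
  have h4 := hB t ht l hl
  have hl0 := hl.1.le
  have hl1 : l ^ j ≤ 1 := pow_le_one₀ hl0 hl.2
  have hlj : 0 ≤ l ^ j := by positivity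
  have h5 : |h t l| ≤ B + D := by
    calc |h t l| = |pev q t l + (h t l - pev q t l)| := by congr 1; ring
      _ ≤ _ := abs_add_le _ _
      _ ≤ B + D * l ^ j := by linarith
      _ ≤ _ := by nlinarith
  calc _ = |(g t l - pev p t l) * h t l + pev p t l * (h t l - pev q t l)| := by congr 1; ring
    _ ≤ _ := abs_add_le _ _
    _ = |g t l - pev p t l| * |h t l| + |pev p t l| * |h t l - pev q t l| := by
        rw [abs_mul, abs_mul]
    _ ≤ C * l ^ j * (B + D) + P * (D * l ^ j) := by gcongr
    _ = _ := by ring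

lemma Ex.pow {T : ℝ} {j : ℕ} {g : ℝ → ℝ → ℝ} (hg : Ex T j g) (k : ℕ) :
    Ex T j fun t l => g t l ^ k := by
  induction k with
  | zero => exact (Ex.const 1).congr fun t _ l _ => pow_zero _
  | succ k ih => exact (ih.mul hg).congr fun t _ l _ => pow_succ _ _

lemma Ex.finsetSum {T : ℝ} {j : ℕ} {g : ℕ → ℝ → ℝ → ℝ} (n : ℕ) (hg : ∀ i, Ex T j (g i)) :
    Ex T j fun t l => ∑ i ∈ Finset.range n, g i t l := by
  induction n with
  | zero => exact (Ex.const 0).congr fun t _ l _ => by simp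
  | succ k ih => exact (ih.add (hg k)).congr fun t _ l _ => Finset.sum_range_succ _ _

lemma Ex.lmul {T : ℝ} {j : ℕ} {g : ℝ → ℝ → ℝ} (hg : Ex T j g) :
    Ex T (j + 1) fun t l => l * g t l := by
  obtain ⟨p, C, hC, hp⟩ := hg
  refine ⟨Polynomial.X * p, C, hC, fun t ht l hl => ?_⟩
  rw [pev_mul, pev_X, ← mul_sub, abs_mul, abs_of_pos hl.1]
  have := mul_le_mul_of_nonneg_left (hp t ht l hl) hl.1.le
  calc _ ≤ _ := this
    _ = _ := by ring

/-- Time primitive of a continuous function. -/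
def primC (a : C(ℝ, ℝ)) : C(ℝ, ℝ) :=
  ⟨fun t => ∫ s in (0:ℝ)..t, a s,
    intervalIntegral.continuous_primitive (fun _ _ => a.continuous.intervalIntegrable _ _) 0⟩

lemma pev_int (p : Polynomial C(ℝ, ℝ)) : ∃ q : Polynomial C(ℝ, ℝ), ∀ t l,
    pev q t l = ∫ s in (0:ℝ)..t, pev p s l := by
  refine ⟨∑ i ∈ Finset.range (p.natDegree + 1),
    Polynomial.C (primC (p.coeff i)) * Polynomial.X ^ i, fun t l => ?_⟩
  simp only [pev_sum p]
  rw [pev_finsetSum, intervalIntegral.integral_finsetSum]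
  · refine Finset.sum_congr rfl fun i _ => ?_
    rw [pev_mul, pev_C, intervalIntegral.integral_mul_const]
    congr 1
    unfold pev; rw [Polynomial.eval₂_X_pow]
  · intro i _
    apply Continuous.intervalIntegrable
    fun_prop

lemma Ex.integral {T : ℝ} {j : ℕ} {g : ℝ → ℝ → ℝ} (hg : Ex T j g)
    (hi : ∀ t ∈ Icc (0:ℝ) T, ∀ l ∈ Ioc (0:ℝ) 1,
      IntervalIntegrable (fun s => g s l) volume 0 t) :
    Ex T j fun t l => ∫ s in (0:ℝ)..t, g s l := by
  obtain ⟨p, C, hC, hp⟩ := hg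
  obtain ⟨q, hq⟩ := pev_int p
  refine ⟨q, C * |T|, by positivity, fun t ht l hl => ?_⟩
  have hc : Continuous fun s => pev p s l :=
    (pev_continuous p).comp (by fun_prop : Continuous fun s : ℝ => (s, l))
  rw [hq, ← intervalIntegral.integral_sub (hi t ht l hl) (hc.intervalIntegrable _ _)]
  have h1 : ‖∫ s in (0:ℝ)..t, (g s l - pev p s l)‖ ≤ (C * l ^ j) * |t - 0| := by
    apply intervalIntegral.norm_integral_le_of_norm_le_const
    intro s hs
    rw [uIoc_of_le ht.1] at hs
    exact hp s ⟨hs.1.le, hs.2.trans ht.2⟩ l hl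
  rw [Real.norm_eq_abs, sub_zero, abs_of_nonneg ht.1] at h1
  have hl0 := hl.1.le
  have : t ≤ |T| := ht.2.trans (le_abs_self _)
  calc _ ≤ _ := h1
    _ ≤ C * l ^ j * |T| := by gcongr
    _ = _ := by ring

lemma exp_rem (n : ℕ) : ∃ D : ℝ, 0 ≤ D ∧ ∀ u : ℝ, 0 ≤ u →
    |Real.exp (-u) - ∑ k ∈ Finset.range n, (-u) ^ k / (k.factorial : ℝ)| ≤ D * u ^ n := by
  rcases Nat.eq_zero_or_pos n with rfl | hn
  · refine ⟨1, zero_le_one, fun u hu => ?_⟩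
    simp [abs_of_pos (Real.exp_pos _), hu]
  refine ⟨max ((n.succ : ℝ) * ((n.factorial : ℝ) * n)⁻¹) (n + 1),
    (by positivity : (0:ℝ) ≤ n + 1).trans (le_max_right _ _), fun u hu => ?_⟩
  rcases le_total u 1 with h1 | h1
  · have := Real.exp_bound (x := -u) (by rwa [abs_neg, abs_of_nonneg hu]) hn
    refine this.trans ?_
    rw [abs_neg, abs_of_nonneg hu, mul_comm]
    gcongr
    refine le_trans (le_of_eq ?_) (le_max_left _ _)
    field_simp
  · have hun : 1 ≤ u ^ n := one_le_pow₀ h1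
    have h2 : |Real.exp (-u)| ≤ u ^ n := by
      rw [abs_of_pos (Real.exp_pos _)]
      exact (Real.exp_le_one_iff.2 (by linarith)).trans hun
    have h3 : |∑ k ∈ Finset.range n, (-u) ^ k / (k.factorial : ℝ)| ≤ n * u ^ n := by
      refine (Finset.abs_sum_le_sum_abs _ _).trans ?_
      refine (Finset.sum_le_card_nsmul _ _ (u ^ n) ?_).trans (by simp)
      intro k hk
      rw [abs_div, abs_pow, abs_neg, abs_of_nonneg hu, Nat.abs_cast]
      refine (div_le_self (by positivity) (by exact_mod_cast k.factorial_pos)).trans ?_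
      exact pow_le_pow_right₀ h1 (Finset.mem_range.1 hk).le
    calc _ ≤ |Real.exp (-u)| + |∑ k ∈ Finset.range n, (-u) ^ k / (k.factorial : ℝ)| := abs_sub _ _
      _ ≤ (n + 1) * u ^ n := by linarith
      _ ≤ _ := by gcongr; exact le_max_right _ _

lemma Ex.exp_neg {T : ℝ} {j : ℕ} {g : ℝ → ℝ → ℝ} (W : ℝ) (hg : Ex T j g)
    (h0 : ∀ t ∈ Icc (0:ℝ) T, ∀ l ∈ Ioc (0:ℝ) 1, 0 ≤ g t l)
    (h1 : ∀ t ∈ Icc (0:ℝ) T, ∀ l ∈ Ioc (0:ℝ) 1, g t l ≤ W * l) :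
    Ex T j fun t l => Real.exp (-(g t l)) := by
  obtain ⟨D, hD, hE⟩ := exp_rem j
  have e1 : Ex T j fun t l => Real.exp (-(g t l)) -
      ∑ k ∈ Finset.range j, (-(g t l)) ^ k / (k.factorial : ℝ) := by
    refine Ex.bigO (D * W ^ j) fun t ht l hl => ?_
    refine (hE _ (h0 t ht l hl)).trans ?_
    rw [mul_assoc, ← mul_pow]
    have := h0 t ht l hl
    have := h1 t ht l hl
    gcongr
  have e2 : Ex T j fun t l =>
      ∑ k ∈ Finset.range j, (-(g t l)) ^ k / (k.factorial : ℝ) := by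
    refine Ex.finsetSum j fun k => ?_
    refine ((((Ex.const (-1)).mul hg).pow k).mul (Ex.const ((k.factorial : ℝ)⁻¹))).congr ?_
    intro t _ l _
    simp only [neg_mul, one_mul, div_eq_mul_inv]
  exact (e1.add e2).congr fun t _ l _ => by ring

/-- The compensated exponential. -/
def cexp (u : ℝ) : ℝ := Real.exp (-u) - 1 + u

lemma cexp_nonneg (u : ℝ) : 0 ≤ cexp u := by
  have := Real.add_one_le_exp (-u); unfold cexp; linarith

lemma cexp_rem (j : ℕ) : ∃ D : ℝ, 0 ≤ D ∧ ∀ u : ℝ, 0 ≤ u →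
    |cexp u - ∑ k ∈ Finset.range j, (-1) ^ (k + 2) / ((k + 2).factorial : ℝ) * u ^ (k + 2)|
      ≤ D * u ^ (j + 2) := by
  obtain ⟨D, hD, h⟩ := exp_rem (j + 2)
  refine ⟨D, hD, fun u hu => ?_⟩
  refine le_trans (le_of_eq ?_) (h u hu)
  rw [Finset.sum_range_succ', Finset.sum_range_succ']
  congr 1
  unfold cexp
  have : ∀ k : ℕ, (-1 : ℝ) ^ (k + 2) / ((k + 2).factorial : ℝ) * u ^ (k + 2)
      = (-u) ^ (k + 1 + 1) / ((k + 1 + 1).factorial : ℝ) := by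
    intro k
    rw [neg_pow u]; ring
  simp only [this]
  simp
  ring

section mech

variable {φ : ℝ → ℝ} {β σ : ℝ} {m : Measure ℝ}

lemma ae_pos (hφ : IsBranchingMechanism φ β σ m) : ∀ᵐ z ∂m, 0 < z := by
  rw [ae_iff]; simp only [not_lt]; exact hφ.carrier

lemma mom_tail (hm : ∀ n : ℕ, 1 ≤ n → (∫⁻ z in Set.Ioi 1, ENNReal.ofReal (z ^ n) ∂m) < ⊤)
    (n : ℕ) (hn : 1 ≤ n) : IntegrableOn (fun z : ℝ => z ^ n) (Ioi 1) m := by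
  refine ⟨by fun_prop, ?_⟩
  rw [hasFiniteIntegral_iff_ofReal]
  · exact hm n hn
  · filter_upwards [ae_restrict_mem measurableSet_Ioi] with z hz
    have : (1:ℝ) < z := hz
    positivity

lemma mom (hφ : IsBranchingMechanism φ β σ m)
    (hm : ∀ n : ℕ, 1 ≤ n → (∫⁻ z in Set.Ioi 1, ENNReal.ofReal (z ^ n) ∂m) < ⊤)
    (n : ℕ) : Integrable (fun z : ℝ => z ^ (n + 2)) m := by
  have h1 := mom_tail hm (n + 2) (by omega)
  have h2 : IntegrableOn (fun z : ℝ => z ^ (n + 2)) (Iic 1) m := by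
    have h3 : Integrable (fun z : ℝ => min 1 (z ^ 2)) m := by
      refine ⟨by fun_prop, ?_⟩
      rw [hasFiniteIntegral_iff_ofReal]
      · exact hφ.levy_finite
      · exact Eventually.of_forall fun z => by positivity
    refine h3.integrableOn.mono' (by fun_prop) ?_
    filter_upwards [ae_restrict_mem measurableSet_Iic, ae_restrict_of_ae (ae_pos hφ)] with z hz hz0
    have hz1 : z ≤ 1 := hz
    rw [Real.norm_eq_abs, abs_of_nonneg (by positivity)]
    have : z ^ 2 ≤ 1 := pow_le_one₀ hz0.le hz1
    rw [min_eq_right this]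
    exact pow_le_pow_of_le_one hz0.le hz1 (by omega)
  have := h2.union h1
  rwa [Iic_union_Ioi, integrableOn_univ] at this

lemma cexp_le : ∃ D : ℝ, 0 ≤ D ∧ ∀ u : ℝ, 0 ≤ u → |cexp u| ≤ D * u ^ 2 := by
  simpa using cexp_rem 0

lemma cexp_integrable (hφ : IsBranchingMechanism φ β σ m)
    (hm : ∀ n : ℕ, 1 ≤ n → (∫⁻ z in Set.Ioi 1, ENNReal.ofReal (z ^ n) ∂m) < ⊤)
    (l : ℝ) (hl : 0 ≤ l) : Integrable (fun z => cexp (z * l)) m := by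
  obtain ⟨D, hD, h⟩ := cexp_le
  refine ((mom hφ hm 0).const_mul (D * l ^ 2)).mono' (by unfold cexp; fun_prop) ?_
  filter_upwards [ae_pos hφ] with z hz
  refine (h _ (by positivity)).trans (le_of_eq (by ring))

/-- The nonlinear part of the branching mechanism. -/
def rho (σ : ℝ) (m : Measure ℝ) (l : ℝ) : ℝ := σ ^ 2 * l ^ 2 / 2 + ∫ z, cexp (z * l) ∂m

/-- The drift. -/
def drift (β : ℝ) (m : Measure ℝ) : ℝ := β - ∫ z in Ioi 1, z ∂m

lemma phi_eq (hφ : IsBranchingMechanism φ β σ m)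
    (hm : ∀ n : ℕ, 1 ≤ n → (∫⁻ z in Set.Ioi 1, ENNReal.ofReal (z ^ n) ∂m) < ⊤)
    (l : ℝ) (hl : 0 ≤ l) : φ l = drift β m * l + rho σ m l := by
  rw [hφ.form l hl]
  have e : (fun z : ℝ => Real.exp (-(z * l)) - 1 + (if z ≤ 1 then z * l else 0))
      = fun z => cexp (z * l) - (Ioi (1:ℝ)).indicator (fun z => z) z * l := by
    ext z
    unfold cexp
    by_cases h : z ≤ 1
    · simp [h]
    · simp [h, not_le.1 h]
  have h1 := mom_tail hm 1 le_rfl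
  simp only [pow_one] at h1
  rw [e, integral_sub (cexp_integrable hφ hm l hl)
    ((h1.integrable_indicator measurableSet_Ioi).mul_const l), integral_mul_const,
    integral_indicator measurableSet_Ioi]
  unfold drift rho
  ring

lemma rho_nonneg (l : ℝ) : 0 ≤ rho σ m l := by
  unfold rho
  have : 0 ≤ ∫ z, cexp (z * l) ∂m := integral_nonneg fun z => cexp_nonneg _
  positivity

lemma rho_cont (hφ : IsBranchingMechanism φ β σ m)
    (hm : ∀ n : ℕ, 1 ≤ n → (∫⁻ z in Set.Ioi 1, ENNReal.ofReal (z ^ n) ∂m) < ⊤) :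
    ContinuousOn (rho σ m) (Ici 0) := by
  unfold rho
  refine ContinuousOn.add (by fun_prop) ?_
  obtain ⟨D, hD, h⟩ := cexp_le
  intro l hl
  have hl0 : (0:ℝ) ≤ l := hl
  refine continuousWithinAt_of_dominated (bound := fun z => (D * (l + 1) ^ 2) * z ^ (0 + 2))
    ?_ ?_ ((mom hφ hm 0).const_mul _) ?_
  · exact Eventually.of_forall fun y => by unfold cexp; fun_prop
  · filter_upwards [self_mem_nhdsWithin, mem_nhdsWithin_of_mem_nhds (Iio_mem_nhds (lt_add_one l))]
      with y hy hy1
    have hy0 : (0:ℝ) ≤ y := hy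
    have hy2 : y < l + 1 := hy1
    filter_upwards [ae_pos hφ] with z hz
    refine (h _ (by positivity)).trans ?_
    rw [mul_pow, mul_comm (z ^ 2), ← mul_assoc]
    gcongr
  · refine Eventually.of_forall fun z => ?_
    unfold cexp
    fun_prop

lemma rho_expand (hφ : IsBranchingMechanism φ β σ m)
    (hm : ∀ n : ℕ, 1 ≤ n → (∫⁻ z in Set.Ioi 1, ENNReal.ofReal (z ^ n) ∂m) < ⊤) (j : ℕ) :
    ∃ c : ℕ → ℝ, ∃ D : ℝ, 0 ≤ D ∧ ∀ l, 0 ≤ l →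
      |rho σ m l - (σ ^ 2 / 2 * l ^ 2 + ∑ k ∈ Finset.range j, c k * l ^ (k + 2))|
        ≤ D * l ^ (j + 2) := by
  obtain ⟨D, hD, h⟩ := cexp_rem j
  refine ⟨fun k => (-1) ^ (k + 2) / ((k + 2).factorial : ℝ) * ∫ z, z ^ (k + 2) ∂m,
    D * ∫ z, |z ^ (j + 2)| ∂m, ?_, fun l hl => ?_⟩
  · exact mul_nonneg hD (integral_nonneg fun z => abs_nonneg _)
  have e : rho σ m l - (σ ^ 2 / 2 * l ^ 2 + ∑ k ∈ Finset.range j,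
      (-1) ^ (k + 2) / ((k + 2).factorial : ℝ) * (∫ z, z ^ (k + 2) ∂m) * l ^ (k + 2))
      = ∫ z, (cexp (z * l) - ∑ k ∈ Finset.range j,
        (-1) ^ (k + 2) / ((k + 2).factorial : ℝ) * (z * l) ^ (k + 2)) ∂m := by
    have hi : ∀ k ∈ Finset.range j, Integrable (fun z : ℝ =>
        (-1) ^ (k + 2) / ((k + 2).factorial : ℝ) * (z * l) ^ (k + 2)) m := by
      intro k _
      simp only [mul_pow]
      exact ((mom hφ hm k).mul_const _).const_mul _
    rw [integral_sub (cexp_integrable hφ hm l hl) (integrable_finsetSum _ hi),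
      integral_finsetSum _ hi]
    simp only [mul_pow, integral_const_mul, integral_mul_const]
    unfold rho
    rw [← sub_sub]
    congr 1
    · ring
    · exact Finset.sum_congr rfl fun k _ => by ring
  rw [e, ← Real.norm_eq_abs]
  calc _ ≤ ∫ z, (D * l ^ (j + 2)) * |z ^ (j + 2)| ∂m := by
        refine norm_integral_le_of_norm_le ((mom hφ hm j).abs.const_mul _) ?_
        filter_upwards [ae_pos hφ] with z hz
        refine (h _ (by positivity)).trans (le_of_eq ?_)
        rw [abs_of_pos (by positivity)]; ring
    _ = _ := by rw [integral_const_mul]; ring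

end mech

lemma ode_local {φ r u : ℝ → ℝ} {b l : ℝ} (hr : ContinuousOn r (Ici 0))
    (hφ : ∀ y, 0 ≤ y → φ y = b * y + r y)
    (hu : ∀ s, 0 ≤ s → 0 ≤ u s ∧ u s = l - ∫ q in (0:ℝ)..s, φ (u q))
    {t : ℝ} (ht : 0 ≤ t) (hi : IntervalIntegrable (fun s => φ (u s)) volume 0 t) :
    ContinuousOn u (Icc 0 t) ∧ ContinuousOn (fun s => φ (u s)) (Icc 0 t) ∧
      u t = Real.exp (-(b * t)) * (l - ∫ s in (0:ℝ)..t, Real.exp (b * s) * r (u s)) := by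
  have hc : ContinuousOn u (Icc 0 t) := by
    have h1 : ContinuousOn (fun s => l - ∫ q in (0:ℝ)..s, φ (u q)) (Icc 0 t) := by
      refine continuousOn_const.sub ?_
      have := intervalIntegral.continuousOn_primitive_interval' hi left_mem_uIcc
      rwa [uIcc_of_le ht] at this
    exact h1.congr fun s hs => (hu s hs.1).2
  have hru : ContinuousOn (fun s => r (u s)) (Icc 0 t) :=
    hr.comp hc fun s hs => (hu s hs.1).1
  have hpu : ContinuousOn (fun s => φ (u s)) (Icc 0 t) := by
    have : ContinuousOn (fun s => b * u s + r (u s)) (Icc 0 t) :=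
      (continuousOn_const.mul hc).add hru
    exact this.congr fun s hs => hφ _ (hu s hs.1).1
  refine ⟨hc, hpu, ?_⟩
  have hd : ∀ s ∈ Ioo 0 t, HasDerivAt u (-(φ (u s))) s := by
    intro s hs
    have hn : Icc 0 t ∈ nhds s := Icc_mem_nhds hs.1 hs.2
    have h1 : HasDerivAt (fun s => ∫ q in (0:ℝ)..s, φ (u q)) (φ (u s)) s := by
      refine intervalIntegral.integral_hasDerivAt_right ?_ ?_ (hpu.continuousAt hn)
      · refine hi.mono_set ?_
        rw [uIcc_of_le hs.1.le, uIcc_of_le ht]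
        exact Icc_subset_Icc le_rfl hs.2.le
      · exact (hpu.mono Ioo_subset_Icc_self).stronglyMeasurableAtFilter isOpen_Ioo s hs
    have h2 := h1.const_sub l
    refine h2.congr_of_eventuallyEq ?_
    filter_upwards [hn] with q hq using (hu q hq.1).2
  have hE : ∀ s, HasDerivAt (fun s => Real.exp (b * s)) (Real.exp (b * s) * b) s := by
    intro s
    simpa using ((hasDerivAt_id s).const_mul b).exp
  have hec : ContinuousOn (fun s => Real.exp (b * s)) (Icc 0 t) := by fun_prop
  have key : ∫ s in (0:ℝ)..t, -(Real.exp (b * s) * r (u s))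
      = Real.exp (b * t) * u t - Real.exp (b * 0) * u 0 := by
    refine intervalIntegral.integral_eq_sub_of_hasDerivAt_of_le (f := fun s => Real.exp (b * s) * u s)
      ht (hec.mul hc) ?_ ?_
    · intro s hs
      have := (hE s).mul (hd s hs)
      refine this.congr_deriv ?_
      rw [hφ _ (hu s hs.1.le).1]; ring
    · refine ContinuousOn.intervalIntegrable ?_
      rw [uIcc_of_le ht]
      exact (hec.mul hru).neg
  have h0 : u 0 = l := by rw [(hu 0 le_rfl).2]; simp
  rw [h0, intervalIntegral.integral_neg, mul_zero, Real.exp_zero, one_mul] at key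
  have : l - ∫ s in (0:ℝ)..t, Real.exp (b * s) * r (u s) = Real.exp (b * t) * u t := by linarith
  rw [this, ← mul_assoc, ← Real.exp_add]
  simp

lemma ode_bound {φ r u : ℝ → ℝ} {b l : ℝ} (hr : ContinuousOn r (Ici 0))
    (hr0 : ∀ y, 0 ≤ r y)
    (hφ : ∀ y, 0 ≤ y → φ y = b * y + r y)
    (hu : ∀ s, 0 ≤ s → 0 ≤ u s ∧ u s = l - ∫ q in (0:ℝ)..s, φ (u q))
    {t : ℝ} (ht : 0 ≤ t) (hi : IntervalIntegrable (fun s => φ (u s)) volume 0 t) :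
    u t ≤ Real.exp (-(b * t)) * l := by
  rw [(ode_local hr hφ hu ht hi).2.2]
  have : 0 ≤ ∫ s in (0:ℝ)..t, Real.exp (b * s) * r (u s) :=
    intervalIntegral.integral_nonneg ht fun s _ => mul_nonneg (Real.exp_pos _).le (hr0 _)
  gcongr
  linarith

lemma exp_bd {b t T : ℝ} (ht : t ∈ Icc 0 T) : Real.exp (-(b * t)) ≤ Real.exp (|b| * T) := by
  apply Real.exp_le_exp.2
  calc -(b * t) ≤ |b| * t := by
        rw [← neg_mul]; exact mul_le_mul_of_nonneg_right (neg_le_abs b) ht.1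
    _ ≤ _ := mul_le_mul_of_nonneg_left ht.2 (abs_nonneg _)

lemma ode_integrable {φ r u : ℝ → ℝ} {b l : ℝ} (hl : 0 ≤ l) (hr : ContinuousOn r (Ici 0))
    (hr0 : ∀ y, 0 ≤ r y)
    (hφ : ∀ y, 0 ≤ y → φ y = b * y + r y)
    (hu : ∀ s, 0 ≤ s → 0 ≤ u s ∧ u s = l - ∫ q in (0:ℝ)..s, φ (u q))
    {T : ℝ} (hT : 0 ≤ T) : IntervalIntegrable (fun s => φ (u s)) volume 0 T := by
  classical
  set I : Set ℝ := {t | t ∈ Icc 0 T ∧ IntervalIntegrable (fun s => φ (u s)) volume 0 t} with hI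
  have hI0 : (0:ℝ) ∈ I := ⟨⟨le_rfl, hT⟩, IntervalIntegrable.refl⟩
  have hbd : BddAbove I := ⟨T, fun t ht => ht.1.2⟩
  set t0 := sSup I with ht0
  have h00 : 0 ≤ t0 := le_csSup hbd hI0
  have h0T : t0 ≤ T := csSup_le ⟨0, hI0⟩ fun t ht => ht.1.2
  have hpc : ContinuousOn φ (Ici 0) := by
    have : ContinuousOn (fun y => b * y + r y) (Ici 0) := by
      exact (by fun_prop : ContinuousOn (fun y : ℝ => b * y) (Ici 0)).add hr
    exact this.congr fun y hy => hφ y hy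
  obtain ⟨B, hB⟩ := (isCompact_Icc (a := (0:ℝ)) (b := Real.exp (|b| * T) * l)).exists_bound_of_continuousOn
    (hpc.mono Icc_subset_Ici_self)
  have h1 : IntegrableOn (fun s => φ (u s)) (Ioo 0 t0) volume := by
    have hcon : ContinuousOn (fun s => φ (u s)) (Ioo 0 t0) := by
      intro s hs
      obtain ⟨t, htI, hst⟩ := exists_lt_of_lt_csSup ⟨0, hI0⟩ hs.2
      have := (ode_local hr hφ hu htI.1.1 htI.2).2.1
      exact (this.continuousAt (Icc_mem_nhds hs.1 hst)).continuousWithinAt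
    refine IntegrableOn.of_bound (by simp) (hcon.aestronglyMeasurable measurableSet_Ioo) B ?_
    filter_upwards [ae_restrict_mem measurableSet_Ioo] with s hs
    obtain ⟨t, htI, hst⟩ := exists_lt_of_lt_csSup ⟨0, hI0⟩ hs.2
    have hsi : IntervalIntegrable (fun s => φ (u s)) volume 0 s := by
      refine htI.2.mono_set ?_
      rw [uIcc_of_le hs.1.le, uIcc_of_le htI.1.1]
      exact Icc_subset_Icc le_rfl hst.le
    refine hB _ ⟨(hu s hs.1.le).1, (ode_bound hr hr0 hφ hu hs.1.le hsi).trans ?_⟩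
    exact mul_le_mul_of_nonneg_right (exp_bd ⟨hs.1.le, hs.2.le.trans h0T⟩) hl
  have h2 : IntegrableOn (fun s => φ (u s)) (Ioc t0 T) volume := by
    have : IntegrableOn (fun _ : ℝ => φ l) (Ioc t0 T) volume := by simp
    refine this.congr_fun (fun s hs => ?_) measurableSet_Ioc
    have hs0 : 0 ≤ s := h00.trans hs.1.le
    have hn : ¬ IntervalIntegrable (fun s => φ (u s)) volume 0 s := fun h =>
      absurd (le_csSup hbd (⟨⟨hs0, hs.2⟩, h⟩ : s ∈ I)) (not_le.2 hs.1)
    have := (hu s hs0).2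
    rw [intervalIntegral.integral_undef hn, sub_zero] at this
    simp only [this]
  have h3 : IntervalIntegrable (fun s => φ (u s)) volume 0 t0 := by
    rw [intervalIntegrable_iff_integrableOn_Ioo_of_le h00]; exact h1
  have h4 : IntervalIntegrable (fun s => φ (u s)) volume t0 T := by
    rw [intervalIntegrable_iff_integrableOn_Ioc_of_le h0T]; exact h2
  exact h3.trans h4

lemma cumulant_ex {φ : ℝ → ℝ} {β σ : ℝ} {m : Measure ℝ}
    (hφ : IsBranchingMechanism φ β σ m)
    (hm : ∀ n : ℕ, 1 ≤ n → (∫⁻ z in Set.Ioi 1, ENNReal.ofReal (z ^ n) ∂m) < ⊤)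
    {v : ℝ → ℝ → ℝ} (hv : IsCumulant φ v) (T : ℝ) :
    (∃ W, 0 ≤ W ∧ ∀ t ∈ Icc (0:ℝ) T, ∀ l ∈ Ioc (0:ℝ) 1, v t l ≤ W * l) ∧
      ∀ j, Ex T j v := by
  set b := drift β m with hb
  have hr := rho_cont hφ hm
  have hr0 : ∀ y, 0 ≤ rho σ m y := rho_nonneg
  have hpe := phi_eq hφ hm
  have hu : ∀ l ∈ Ioc (0:ℝ) 1, ∀ s, 0 ≤ s → 0 ≤ v s l ∧ v s l = l - ∫ q in (0:ℝ)..s, φ (v q l) :=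
    fun l hl s hs => hv l hl.1.le s hs
  have hint : ∀ l ∈ Ioc (0:ℝ) 1, ∀ t, 0 ≤ t → IntervalIntegrable (fun s => φ (v s l)) volume 0 t :=
    fun l hl t ht => ode_integrable hl.1.le hr hr0 hpe (hu l hl) ht
  have hsol := fun l hl t ht => ode_local hr hpe (hu l hl) ht (hint l hl t ht)
  set W := Real.exp (|b| * T) with hW
  have hW0 : 0 ≤ W := (Real.exp_pos _).le
  have hvW : ∀ t ∈ Icc (0:ℝ) T, ∀ l ∈ Ioc (0:ℝ) 1, v t l ≤ W * l := by
    intro t ht l hl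
    refine (ode_bound hr hr0 hpe (hu l hl) ht.1 (hint l hl t ht.1)).trans ?_
    exact mul_le_mul_of_nonneg_right (exp_bd ht) hl.1.le
  refine ⟨⟨W, hW0, hvW⟩, ?_⟩
  -- expansion of `v / l`
  have hw : ∀ j, Ex T j fun t l => v t l / l := by
    intro j
    induction j with
    | zero =>
      refine Ex.bigO W fun t ht l hl => ?_
      have h0 := (hu l hl t ht.1).1
      rw [abs_of_nonneg (div_nonneg h0 hl.1.le), pow_zero, mul_one, div_le_iff₀ hl.1]
      exact hvW t ht l hl
    | succ j ih =>
      obtain ⟨c, D, hD, hc⟩ := rho_expand (σ := σ) hφ hm j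
      have e1 : Ex T (j + 1) fun t l => (rho σ m (v t l) - (σ ^ 2 / 2 * (v t l) ^ 2 +
          ∑ k ∈ Finset.range j, c k * (v t l) ^ (k + 2))) / l := by
        refine Ex.bigO (D * W ^ (j + 2)) fun t ht l hl => ?_
        have h0 := (hu l hl t ht.1).1
        have h1 := hvW t ht l hl
        rw [abs_div, abs_of_pos hl.1, div_le_iff₀ hl.1]
        calc _ ≤ _ := hc _ h0
          _ ≤ D * (W * l) ^ (j + 2) := by gcongr
          _ = _ := by ring
      have e2 : Ex T (j + 1) fun t l => l * ((σ ^ 2 / 2 * (v t l / l) ^ 2 +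
          ∑ k ∈ Finset.range j, c k * (l ^ k * (v t l / l) ^ (k + 2)))) := by
        refine Ex.lmul (((Ex.const _).mul (ih.pow 2)).add (Ex.finsetSum j fun k => ?_))
        exact (Ex.const _).mul ((Ex.var.pow k).mul (ih.pow (k + 2)))
      have e3 : Ex T (j + 1) fun t l => Real.exp (b * t) * rho σ m (v t l) / l := by
        refine ((Ex.time (fun t => Real.exp (b * t)) (by fun_prop)).mul (e1.add e2)).congr ?_
        intro t ht l hl
        have hl0 := hl.1.ne'
        have e4 : l * (σ ^ 2 / 2 * (v t l / l) ^ 2 +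
            ∑ k ∈ Finset.range j, c k * (l ^ k * (v t l / l) ^ (k + 2)))
            = (σ ^ 2 / 2 * (v t l) ^ 2 + ∑ k ∈ Finset.range j, c k * (v t l) ^ (k + 2)) / l := by
          rw [eq_div_iff hl0, mul_comm, ← mul_assoc, mul_add, Finset.mul_sum]
          congr 1
          · field_simp
          · refine Finset.sum_congr rfl fun k _ => ?_
            rw [div_pow, pow_add l k 2]
            field_simp
        rw [e4]; ring
      have e5 := e3.integral (fun t ht l hl => by
        refine ContinuousOn.intervalIntegrable ?_
        rw [uIcc_of_le ht.1]
        have h1 : ContinuousOn (fun s => rho σ m (v s l)) (Icc 0 t) :=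
          hr.comp (hsol l hl t ht.1).1 fun s hs => (hu l hl s hs.1).1
        have h2 : ContinuousOn (fun s => Real.exp (b * s)) (Icc 0 t) := by fun_prop
        exact (h2.mul h1).div_const l)
      refine ((Ex.time (fun t => Real.exp (-(b * t))) (by fun_prop)).mul
        ((Ex.const 1).add ((Ex.const (-1)).mul e5))).congr ?_
      intro t ht l hl
      have hl0 := hl.1.ne'
      rw [(hsol l hl t ht.1).2.2, intervalIntegral.integral_div, ← hb]
      field_simp
      ring
  intro j
  refine (Ex.var.mul (hw j)).congr fun t ht l hl => ?_
  have hl0 := hl.1.ne'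
  field_simp

lemma fdiff_pow {n i : ℕ} (h : i < n) :
    ∑ k ∈ Finset.range (n + 1), (-1 : ℝ) ^ k * (n.choose k) * ((k : ℝ) + 1) ^ i = 0 := by
  have h1 := congrFun (fwdDiff_iter_pow_eq_zero_of_lt (R := ℝ) h) 1
  rw [fwdDiff_iter_eq_sum_shift] at h1
  have h2 : ∑ k ∈ Finset.range (n + 1), (-1 : ℝ) ^ k * (n.choose k) * ((k : ℝ) + 1) ^ i
      = (-1) ^ n * ∑ k ∈ Finset.range (n + 1), ((-1 : ℤ) ^ (n - k) * (n.choose k)) •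
        (1 + k • (1:ℝ)) ^ i := by
    rw [Finset.mul_sum]
    refine Finset.sum_congr rfl fun k hk => ?_
    have hk' : k ≤ n := Nat.lt_succ_iff.1 (Finset.mem_range.1 hk)
    have h3 : (-1 : ℝ) ^ n * (-1) ^ (n - k) = (-1) ^ k := by
      rw [← pow_add, show n + (n - k) = k + 2 * (n - k) by omega, pow_add, pow_mul]; simp
    rw [zsmul_eq_mul, ← h3]
    push_cast
    simp only [nsmul_eq_mul, mul_one]
    ring
  rw [h2, h1]; simp

lemma fdiff_pev (n : ℕ) (p : Polynomial C(ℝ, ℝ)) (T : ℝ) : ∃ B : ℝ, 0 ≤ B ∧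
    ∀ t ∈ Icc (0:ℝ) T, ∀ l ∈ Ioc (0:ℝ) 1,
      |∑ k ∈ Finset.range (n + 1), (-1 : ℝ) ^ k * (n.choose k) * pev p t (((k : ℝ) + 1) * l)|
        ≤ B * l ^ n := by
  -- the coefficients are bounded
  have hb : ∀ i, ∃ b : ℝ, 0 ≤ b ∧ ∀ t ∈ Icc (0:ℝ) T, |p.coeff i t| ≤ b := by
    intro i
    obtain ⟨b, hb⟩ := (isCompact_Icc (a := (0:ℝ)) (b := T)).exists_bound_of_continuousOn
      (p.coeff i).continuous.continuousOn
    exact ⟨max b 0, le_max_right _ _, fun t ht => (hb t ht).trans (le_max_left _ _)⟩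
  choose b hb0 hb using hb
  set s : ℕ → ℝ := fun i =>
    ∑ k ∈ Finset.range (n + 1), (-1 : ℝ) ^ k * (n.choose k) * ((k : ℝ) + 1) ^ i with hs
  refine ⟨∑ i ∈ Finset.range (p.natDegree + 1), b i * |s i|,
    Finset.sum_nonneg fun i _ => mul_nonneg (hb0 i) (abs_nonneg _), fun t ht l hl => ?_⟩
  have e : ∑ k ∈ Finset.range (n + 1), (-1 : ℝ) ^ k * (n.choose k) * pev p t (((k : ℝ) + 1) * l)
      = ∑ i ∈ Finset.range (p.natDegree + 1), p.coeff i t * s i * l ^ i := by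
    simp only [pev_sum, Finset.mul_sum, hs, Finset.sum_mul]
    rw [Finset.sum_comm]
    refine Finset.sum_congr rfl fun i _ => Finset.sum_congr rfl fun k _ => ?_
    rw [mul_pow]; ring
  rw [e, Finset.sum_mul]
  refine (Finset.abs_sum_le_sum_abs _ _).trans (Finset.sum_le_sum fun i _ => ?_)
  have hl0 := hl.1.le
  by_cases hi : i < n
  · have : s i = 0 := fdiff_pow hi
    rw [this]; simp
  · rw [abs_mul, abs_mul, abs_of_nonneg (by positivity : 0 ≤ l ^ i)]
    have h1 := hb i t ht
    have h2 : l ^ i ≤ l ^ n := pow_le_pow_of_le_one hl0 hl.2 (not_lt.1 hi)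
    gcongr
    exact mul_nonneg (hb0 i) (abs_nonneg _)

lemma moment_bdd (n : ℕ) (T : ℝ) (L : ℝ → ℝ → ℝ) (hL : Ex T n L) (q : ℝ → Measure ℝ)
    (hq : ∀ t ∈ Icc (0:ℝ) T, IsProbabilityMeasure (q t) ∧ q t (Iio 0) = 0 ∧
      ∀ l, 0 ≤ l → ∫ y, Real.exp (-(l * y)) ∂(q t) = L t l) :
    ∃ C : ℝ, 0 ≤ C ∧ ∀ t ∈ Icc (0:ℝ) T,
      ∫⁻ z, ENNReal.ofReal (z ^ n) ∂(q t) ≤ ENNReal.ofReal C := by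
  obtain ⟨p, A, hA, hp⟩ := hL
  obtain ⟨B, hB, hpB⟩ := fdiff_pev n p T
  set S : ℝ := ∑ k ∈ Finset.range (n + 1), (n.choose k : ℝ) * (A * ((k : ℝ) + 1) ^ n) with hS
  have hS0 : 0 ≤ S := Finset.sum_nonneg fun k _ => by positivity
  refine ⟨S + B, by positivity, fun t ht => ?_⟩
  obtain ⟨hprob, hneg, hlap⟩ := hq t ht
  have hnn : ∀ᵐ z ∂(q t), 0 ≤ z := by
    rw [ae_iff]; simp only [not_le]; exact hneg
  have hexpint : ∀ l, 0 ≤ l → Integrable (fun y => Real.exp (-(l * y))) (q t) := by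
    intro l hl
    refine Integrable.of_bound (by fun_prop) 1 ?_
    filter_upwards [hnn] with y hy
    rw [Real.norm_eq_abs, abs_of_pos (Real.exp_pos _), Real.exp_le_one_iff]
    have := mul_nonneg hl hy
    linarith
  -- bound for the truncated moments
  have hmain : ∀ l : ℝ, 0 < l → ((n : ℝ) + 1) * l ≤ 1 →
      ∫⁻ z, ENNReal.ofReal (Real.exp (-(l * z)) * ((1 - Real.exp (-(l * z))) / l) ^ n) ∂(q t)
        ≤ ENNReal.ofReal (S + B) := by
    intro l hl hl1
    have hl2 : l ≤ 1 := by nlinarith [(Nat.cast_nonneg n : (0:ℝ) ≤ n)]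
    have e : (fun z => Real.exp (-(l * z)) * ((1 - Real.exp (-(l * z))) / l) ^ n) = fun z =>
        ∑ k ∈ Finset.range (n + 1), ((-1 : ℝ) ^ k * (n.choose k) / l ^ n) *
          Real.exp (-((((k : ℝ) + 1) * l) * z)) := by
      ext z
      rw [div_pow, sub_eq_neg_add, add_pow, Finset.sum_div, Finset.mul_sum]
      refine Finset.sum_congr rfl fun k _ => ?_
      have : Real.exp (-((((k : ℝ) + 1) * l) * z)) = Real.exp (-(l * z)) * Real.exp (-(l * z)) ^ k := by
        rw [← Real.exp_nat_mul, ← Real.exp_add]; congr 1; ring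
      rw [this, neg_pow, one_pow]; ring
    have hi : ∀ k ∈ Finset.range (n + 1), Integrable (fun z =>
        ((-1 : ℝ) ^ k * (n.choose k) / l ^ n) * Real.exp (-((((k : ℝ) + 1) * l) * z))) (q t) :=
      fun k _ => (hexpint _ (by positivity)).const_mul _
    rw [← ofReal_integral_eq_lintegral_ofReal]
    · apply ENNReal.ofReal_le_ofReal
      rw [e, integral_finsetSum _ hi]
      simp only [integral_const_mul]
      have hval : ∀ k ∈ Finset.range (n + 1),
          ((-1 : ℝ) ^ k * (n.choose k) / l ^ n) *
            ∫ z, Real.exp (-((((k : ℝ) + 1) * l) * z)) ∂(q t)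
          = ((-1 : ℝ) ^ k * (n.choose k) * (L t (((k : ℝ) + 1) * l) - pev p t (((k : ℝ) + 1) * l))
            + (-1 : ℝ) ^ k * (n.choose k) * pev p t (((k : ℝ) + 1) * l)) / l ^ n := by
        intro k _
        rw [hlap _ (by positivity)]; ring
      rw [Finset.sum_congr rfl hval, ← Finset.sum_div, Finset.sum_add_distrib,
        div_le_iff₀ (by positivity), add_mul]
      refine add_le_add ?_ ((le_abs_self _).trans (hpB t ht l ⟨hl, hl2⟩))
      rw [hS, Finset.sum_mul]
      refine Finset.sum_le_sum fun k hk => ?_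
      have hk' : (k : ℝ) ≤ n := by
        exact_mod_cast Nat.lt_succ_iff.1 (Finset.mem_range.1 hk)
      have h1 := hp t ht (((k : ℝ) + 1) * l) ⟨by positivity, by nlinarith⟩
      refine (le_abs_self _).trans ?_
      rw [abs_mul, abs_mul, abs_pow, abs_neg, abs_one, one_pow, one_mul, Nat.abs_cast, mul_assoc]
      rw [mul_pow] at h1
      refine mul_le_mul_of_nonneg_left (h1.trans (le_of_eq (by ring))) (by positivity)
    · rw [e]; exact integrable_finsetSum _ hi
    · filter_upwards [hnn] with z hz
      have : Real.exp (-(l * z)) ≤ 1 := by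
        rw [Real.exp_le_one_iff]; have := mul_nonneg hl.le hz; linarith
      have h2 : 0 ≤ 1 - Real.exp (-(l * z)) := by linarith
      exact mul_nonneg (Real.exp_pos _).le (by positivity)
  -- Fatou
  set ls : ℕ → ℝ := fun N => 1 / ((N : ℝ) + 1) with hls
  have hls0 : ∀ N, 0 < ls N := fun N => by simp only [hls]; positivity
  have hlst : Tendsto ls atTop (nhds 0) := tendsto_one_div_add_atTop_nhds_zero_nat
  set G : ℕ → ℝ → ENNReal := fun N z => ENNReal.ofReal
    (Real.exp (-(ls N * z)) * ((1 - Real.exp (-(ls N * z))) / ls N) ^ n) with hG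
  have hlim : ∀ z : ℝ, Tendsto (fun N => G N z) atTop (nhds (ENNReal.ofReal (z ^ n))) := by
    intro z
    refine ENNReal.tendsto_ofReal ?_
    have h1 : Tendsto (fun N => Real.exp (-(ls N * z))) atTop (nhds 1) := by
      have : Tendsto (fun N => Real.exp (-(ls N * z))) atTop (nhds (Real.exp (-(0 * z)))) :=
        (Real.continuous_exp.tendsto _).comp ((hlst.mul_const z).neg)
      simpa using this
    have hd : HasDerivAt (fun l : ℝ => 1 - Real.exp (-(l * z))) z 0 := by
      have := ((((hasDerivAt_id (0:ℝ)).mul_const z).neg).exp).const_sub 1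
      simpa using this
    have h2 : Tendsto (fun N => (1 - Real.exp (-(ls N * z))) / ls N) atTop (nhds z) := by
      have h3 := hd.tendsto_slope.comp (tendsto_nhdsWithin_iff.2 ⟨hlst,
        Eventually.of_forall fun N => (hls0 N).ne'⟩)
      refine h3.congr fun N => ?_
      simp [slope_def_field]
    simpa using h1.mul (h2.pow n)
  calc ∫⁻ z, ENNReal.ofReal (z ^ n) ∂(q t) = ∫⁻ z, liminf (fun N => G N z) atTop ∂(q t) := by
        congr 1; ext z; exact (hlim z).liminf_eq.symm
    _ ≤ liminf (fun N => ∫⁻ z, G N z ∂(q t)) atTop :=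
        lintegral_liminf_le fun N => by simp only [hG]; fun_prop
    _ ≤ ENNReal.ofReal (S + B) := by
        refine liminf_le_of_frequently_le' (Eventually.frequently ?_)
        filter_upwards [eventually_ge_atTop n] with N hN
        refine hmain _ (hls0 N) ?_
        simp only [hls]
        rw [mul_one_div, div_le_one (by positivity)]
        have : (n : ℝ) ≤ N := by exact_mod_cast hN
        linarith

lemma condB_poly {f : ℝ → ℝ} {K : ℝ} (hf : ConditionB f K) :
    ∃ N : ℕ, ∃ D : ℝ, 0 ≤ D ∧ ∀ z, 0 ≤ z → f z ≤ D + D * z ^ N := by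
  obtain ⟨hK, -, hmono, hsub, h1⟩ := hf
  obtain ⟨N, hN⟩ := pow_unbounded_of_one_lt (K * f 2) (one_lt_two : (1:ℝ) < 2)
  have hf1 : 1 < f 1 := h1 1 zero_le_one
  have hf2 : 1 < f 2 := h1 2 zero_le_two
  have hpow : ∀ k : ℕ, f (2 ^ k) ≤ (2 ^ N) ^ k * f 1 := by
    intro k
    induction k with
    | zero => simp
    | succ k ih =>
      rw [pow_succ']
      have hk := h1 (2 ^ k) (by positivity)
      calc f (2 * 2 ^ k) ≤ K * f 2 * f (2 ^ k) := hsub _ _ zero_le_two (by positivity)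
        _ ≤ 2 ^ N * ((2 ^ N) ^ k * f 1) := by gcongr
        _ = _ := by ring
  refine ⟨N, 2 ^ N * f 1, by positivity, fun z hz => ?_⟩
  rcases le_total z 1 with hz1 | hz1
  · calc f z ≤ f 1 := hmono hz (zero_le_one : (0:ℝ) ≤ 1) hz1
      _ ≤ 2 ^ N * f 1 := le_mul_of_one_le_left (by linarith) (one_le_pow₀ one_le_two)
      _ ≤ _ := le_add_of_nonneg_right (by positivity)
  · obtain ⟨k, hk1, hk2⟩ := exists_nat_pow_near hz1 (one_lt_two : (1:ℝ) < 2)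
    calc f z ≤ f (2 ^ (k + 1)) := hmono hz (by simp : (0:ℝ) ≤ 2 ^ (k + 1)) hk2.le
      _ ≤ (2 ^ N) ^ (k + 1) * f 1 := hpow _
      _ = 2 ^ N * f 1 * (2 ^ k) ^ N := by ring
      _ ≤ 2 ^ N * f 1 * z ^ N := by gcongr
      _ ≤ _ := le_add_of_nonneg_left (by positivity)

/-- Lemma 3.7: if the Lévy measure `m` has finite moments of every order on
`(1,∞)`, then for every `x > 0` the function `t ↦ ∫ f dQ_t(x,·)` is finite and
locally bounded on `[0,∞)`. -/
theorem cb_f_moment_locally_bounded_poly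
    (f : ℝ → ℝ) (K : ℝ) (hf : ConditionB f K)
    (φ : ℝ → ℝ) (β σ : ℝ) (m : Measure ℝ)
    (hφ : IsBranchingMechanism φ β σ m) (hGrey : GreyCondition φ)
    (hm : ∀ n : ℕ, 1 ≤ n → (∫⁻ z in Set.Ioi 1, ENNReal.ofReal (z ^ n) ∂m) < ⊤)
    (v : ℝ → ℝ → ℝ) (hv : IsCumulant φ v)
    (Q : ℝ → ℝ → Measure ℝ) (hQ : IsCBSemigroup v Q)
    (x : ℝ) (hx : 0 < x) :
    (∀ t, 0 ≤ t → (∫⁻ z, ENNReal.ofReal (f z) ∂(Q t x)) < ⊤) ∧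
      ∀ T, 0 < T → ∃ C : ℝ, ∀ t ∈ Set.Icc (0:ℝ) T,
        (∫⁻ z, ENNReal.ofReal (f z) ∂(Q t x)) ≤ ENNReal.ofReal C := by
  have main : ∀ T, 0 < T → ∃ C : ℝ, ∀ t ∈ Set.Icc (0:ℝ) T,
        (∫⁻ z, ENNReal.ofReal (f z) ∂(Q t x)) ≤ ENNReal.ofReal C := by
    intro T hT
    obtain ⟨N, D, hD, hfz⟩ := condB_poly hf
    obtain ⟨⟨W, hW, hvW⟩, hex⟩ := cumulant_ex hφ hm hv T
    have hE : Ex T N fun t l => Real.exp (-(x * v t l)) := by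
      refine Ex.exp_neg (x * W) ((Ex.const x).mul (hex N)) ?_ ?_
      · intro t ht l hl
        exact mul_nonneg hx.le (hv l hl.1.le t ht.1).1
      · intro t ht l hl
        rw [mul_assoc]
        exact mul_le_mul_of_nonneg_left (hvW t ht l hl) hx.le
    obtain ⟨C, hC, hmom⟩ := moment_bdd N T _ hE (fun t => Q t x)
      (fun t ht => hQ t x ht.1 hx.le)
    refine ⟨D + D * C, fun t ht => ?_⟩
    obtain ⟨hprob, hneg, -⟩ := hQ t x ht.1 hx.le
    have hnn : ∀ᵐ z ∂(Q t x), 0 ≤ z := by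
      rw [ae_iff]; simp only [not_le]; exact hneg
    calc ∫⁻ z, ENNReal.ofReal (f z) ∂(Q t x)
        ≤ ∫⁻ z, (ENNReal.ofReal D + ENNReal.ofReal D * ENNReal.ofReal (z ^ N)) ∂(Q t x) := by
          refine lintegral_mono_ae ?_
          filter_upwards [hnn] with z hz
          rw [← ENNReal.ofReal_mul hD, ← ENNReal.ofReal_add hD (by positivity)]
          exact ENNReal.ofReal_le_ofReal (hfz z hz)
      _ = ENNReal.ofReal D + ENNReal.ofReal D * ∫⁻ z, ENNReal.ofReal (z ^ N) ∂(Q t x) := by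
          rw [lintegral_add_left measurable_const, lintegral_const_mul _ (by fun_prop)]
          simp
      _ ≤ ENNReal.ofReal D + ENNReal.ofReal D * ENNReal.ofReal C := by
          gcongr
          exact hmom t ht
      _ = _ := by
          rw [← ENNReal.ofReal_mul hD, ← ENNReal.ofReal_add hD (by positivity)]
  refine ⟨fun t ht => ?_, main⟩
  obtain ⟨C, hC⟩ := main (t + 1) (by linarith)
  exact (hC t ⟨ht, by linarith⟩).trans_lt ENNReal.ofReal_lt_top
end
end

section
/- Let f satisfy Condition B with constant K, let φ be a branching mechanism satisfying Grey's condition whose Lévy measure m satisfies ∫_{(1,∞)} f(z) m(dz) < ∞, and let (Q_t)_{t≥0} be the transition semigroup of the CB-process with branching mechanism φ. Then for every x ≥ 0, the function t ↦ ∫_{[0,∞)} f(z) Q_t(x,dz) is finite for every t ≥ 0 and locally bounded on [0,∞) (i.e., bounded on every compact interval [0,T]). -/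
open MeasureTheory Set Filter

noncomputable section

/-- Integrand of the Levy part. -/
def kern (l z : ℝ) : ℝ := Real.exp (-(z * l)) - 1 + (if z ≤ 1 then z * l else 0)

/-- Weight dominating the Levy integrands. -/
structure GoodWeight (m : Measure ℝ) (ρ : ℝ → ℝ) : Prop where
  int : Integrable ρ m
  pos : ∀ᵐ z ∂m, 0 < z
  small : ∀ z, z ≤ 1 → z ^ 2 ≤ ρ z
  large : ∀ z, 1 < z → z ≤ ρ z

lemma GoodWeight.nonneg {m : Measure ℝ} {ρ : ℝ → ℝ} (h : GoodWeight m ρ) (z : ℝ) : 0 ≤ ρ z := by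
  by_cases hz : z ≤ 1
  · exact (sq_nonneg z).trans (h.small z hz)
  · have := h.large z (by linarith); linarith

lemma GoodWeight.integral_nonneg' {m : Measure ℝ} {ρ : ℝ → ℝ} (h : GoodWeight m ρ) :
    0 ≤ ∫ z, ρ z ∂m := integral_nonneg h.nonneg

lemma kern_lip {m : Measure ℝ} {ρ : ℝ → ℝ} (h : GoodWeight m ρ) {R a b z : ℝ} (hz : 0 < z)
    (ha : a ∈ Icc 0 R) (hb : b ∈ Icc 0 R) :
    |kern a z - kern b z| ≤ (R + 1) * ρ z * |a - b| := by
  have hR : 0 ≤ R := ha.1.trans ha.2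
  have hρ := h.nonneg z
  have key : ∀ l ∈ Icc 0 R, HasDerivWithinAt (fun l => kern l z)
      (-z * Real.exp (-(z * l)) + (if z ≤ 1 then z else 0)) (Icc 0 R) l := by
    intro l hl
    apply HasDerivAt.hasDerivWithinAt
    unfold kern
    have h1 : HasDerivAt (fun l => -(z * l)) (-z) l := by
      simpa using ((hasDerivAt_id' l).const_mul z).fun_neg
    have h2 := h1.exp.sub_const 1
    split_ifs with hz1
    · have h3 : HasDerivAt (fun l => z * l) z l := by
        simpa using ((hasDerivAt_id l).const_mul z)
      exact (h2.fun_add h3).congr_deriv (by ring)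
    · exact (h2.fun_add (hasDerivAt_const l (0:ℝ))).congr_deriv (by ring)
  refine Convex.norm_image_sub_le_of_norm_hasDerivWithin_le key ?_ (convex_Icc 0 R) hb ha
  intro l hl
  rw [Real.norm_eq_abs]
  have e1 : Real.exp (-(z * l)) ≤ 1 := Real.exp_le_one_iff.2 (by nlinarith [hl.1])
  have e0 := Real.exp_pos (-(z * l))
  have e2 := Real.add_one_le_exp (-(z * l))
  split_ifs with hz1
  · have hs := h.small z hz1
    have h1 : -z * Real.exp (-(z * l)) + z = z * (1 - Real.exp (-(z * l))) := by ring
    rw [h1, abs_of_nonneg (by nlinarith)]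
    have h2 : z * (1 - Real.exp (-(z * l))) ≤ z * (z * l) := by
      apply mul_le_mul_of_nonneg_left _ hz.le; linarith
    have h3 : z * (z * l) ≤ z ^ 2 * R := by nlinarith [hl.2, sq_nonneg z]
    nlinarith
  · have hs := h.large z (by linarith)
    rw [add_zero, neg_mul, abs_neg, abs_of_nonneg (by positivity)]
    nlinarith

lemma kern_zero (z : ℝ) : kern 0 z = 0 := by simp [kern]

lemma kern_measurable (l : ℝ) : Measurable (kern l) := by
  unfold kern
  refine Measurable.add (by fun_prop) ?_
  exact Measurable.ite measurableSet_Iic (by fun_prop) (by fun_prop)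

lemma kern_integrable {m : Measure ℝ} {ρ : ℝ → ℝ} (h : GoodWeight m ρ) {l : ℝ} (hl : 0 ≤ l) :
    Integrable (kern l) m := by
  refine Integrable.mono' (h.int.const_mul ((l + 1) * l)) (kern_measurable l).aestronglyMeasurable ?_
  filter_upwards [h.pos] with z hz
  have := kern_lip h hz (a := l) (b := 0) (R := l) ⟨hl, le_rfl⟩ ⟨le_rfl, hl⟩
  rw [kern_zero, sub_zero, sub_zero, abs_of_nonneg hl] at this
  rw [Real.norm_eq_abs]; linarith

lemma kern_lower {m : Measure ℝ} {ρ : ℝ → ℝ} (h : GoodWeight m ρ) {l z : ℝ} (hl : 0 ≤ l) :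
    -(l * ρ z) ≤ kern l z := by
  unfold kern
  have e2 := Real.add_one_le_exp (-(z * l))
  have hρ := h.nonneg z
  split_ifs with hz1
  · nlinarith
  · have := h.large z (by linarith)
    nlinarith

lemma phi_lip {φ : ℝ → ℝ} {β σ : ℝ} {m : Measure ℝ} {ρ : ℝ → ℝ}
    (hφ : IsBranchingMechanism φ β σ m) (h : GoodWeight m ρ) (R : ℝ) :
    ∃ C : ℝ, 0 ≤ C ∧ ∀ a ∈ Icc 0 R, ∀ b ∈ Icc 0 R, |φ a - φ b| ≤ C * |a - b| := by
  by_cases hR : 0 ≤ R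
  swap
  · exact ⟨0, le_rfl, fun a ha => absurd (ha.1.trans ha.2) hR⟩
  have hI := h.integral_nonneg'
  refine ⟨|β| + σ ^ 2 * R + (R + 1) * ∫ z, ρ z ∂m, by positivity, ?_⟩
  intro a ha b hb
  have e : φ a - φ b = β * (a - b) + σ ^ 2 * ((a + b) / 2) * (a - b)
      + ∫ z, (kern a z - kern b z) ∂m := by
    rw [integral_sub (kern_integrable h ha.1) (kern_integrable h hb.1), hφ.form a ha.1,
      hφ.form b hb.1]
    unfold kern
    ring
  have h3 : |∫ z, (kern a z - kern b z) ∂m| ≤ (R + 1) * (∫ z, ρ z ∂m) * |a - b| := by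
    have : (R + 1) * (∫ z, ρ z ∂m) * |a - b| = ∫ z, (R + 1) * ρ z * |a - b| ∂m := by
      rw [integral_mul_const, integral_const_mul]
    rw [this, ← Real.norm_eq_abs]
    refine norm_integral_le_of_norm_le ((h.int.const_mul _).mul_const _) ?_
    filter_upwards [h.pos] with z hz
    exact kern_lip h hz ha hb
  have h1 : |β * (a - b)| = |β| * |a - b| := abs_mul _ _
  have h2 : |σ ^ 2 * ((a + b) / 2) * (a - b)| ≤ σ ^ 2 * R * |a - b| := by
    rw [abs_mul, abs_of_nonneg (by have := ha.1; have := hb.1; positivity)]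
    gcongr
    linarith [ha.2, hb.2]
  rw [e]
  calc _ ≤ |β * (a - b)| + |σ ^ 2 * ((a + b) / 2) * (a - b)| + |∫ z, (kern a z - kern b z) ∂m| :=
        abs_add_three _ _ _
    _ ≤ _ := by rw [h1]; linarith

lemma phi_lower {φ : ℝ → ℝ} {β σ : ℝ} {m : Measure ℝ} {ρ : ℝ → ℝ}
    (hφ : IsBranchingMechanism φ β σ m) (h : GoodWeight m ρ) :
    ∃ C : ℝ, ∀ l, 0 ≤ l → -φ l ≤ C * l := by
  refine ⟨|β| + ∫ z, ρ z ∂m, fun l hl => ?_⟩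
  have h1 : ∫ z, -(l * ρ z) ∂m ≤ ∫ z, kern l z ∂m :=
    integral_mono (h.int.const_mul l).neg (kern_integrable h hl) (fun z => kern_lower h hl)
  rw [integral_neg, integral_const_mul] at h1
  have e := hφ.form l hl
  change φ l = β * l + σ ^ 2 * l ^ 2 / 2 + ∫ z, kern l z ∂m at e
  have := neg_abs_le β
  have : 0 ≤ σ ^ 2 * l ^ 2 / 2 := by positivity
  nlinarith

lemma gron {u u' : ℝ → ℝ} {δ K ε T : ℝ} (hu : ContinuousOn u (Icc 0 T))
    (hu' : ∀ t ∈ Ico 0 T, HasDerivWithinAt u (u' t) (Ici t) t)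
    (h0 : u 0 ≤ δ) (hb : ∀ t ∈ Ico 0 T, u' t ≤ K * u t + ε) :
    ∀ t ∈ Icc 0 T, u t ≤ gronwallBound δ K ε t := by
  intro t ht
  have := le_gronwallBound_of_liminf_deriv_right_le (f' := u') hu
    (fun x hx r hr => by
      have := (hu' x hx).liminf_right_slope_le hr
      simpa [slope_def_field, div_eq_inv_mul] using this) h0 hb t ht
  simpa using this

/-- The regularity of `φ` that is used. -/
structure NicePhi (φ : ℝ → ℝ) : Prop where
  lip : ∀ R : ℝ, ∃ C : ℝ, 0 ≤ C ∧ ∀ a ∈ Icc 0 R, ∀ b ∈ Icc 0 R, |φ a - φ b| ≤ C * |a - b|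
  low : ∃ C : ℝ, ∀ l, 0 ≤ l → -φ l ≤ C * l

lemma NicePhi.lipOn {φ : ℝ → ℝ} (h : NicePhi φ) (R : ℝ) :
    ∃ C : NNReal, LipschitzOnWith C φ (Icc 0 R) := by
  obtain ⟨C, hC, hl⟩ := h.lip R
  refine ⟨⟨C, hC⟩, LipschitzOnWith.of_dist_le_mul ?_⟩
  intro a ha b hb
  exact hl a ha b hb

lemma NicePhi.cont {φ : ℝ → ℝ} (h : NicePhi φ) : ContinuousOn φ (Ici 0) := by
  intro a ha
  obtain ⟨C, hC⟩ := h.lipOn (a + 1)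
  have h1 := hC.continuousOn a ⟨ha, by linarith⟩
  refine h1.mono_of_mem_nhdsWithin ?_
  rw [← Ici_inter_Iic]
  exact inter_mem self_mem_nhdsWithin (mem_nhdsWithin_of_mem_nhds (Iic_mem_nhds (by linarith)))

lemma sol_reg {φ u : ℝ → ℝ} {l T : ℝ} (hφ : NicePhi φ) (hT : 0 ≤ T)
    (hu0 : ∀ t ∈ Icc 0 T, 0 ≤ u t) (hu : ∀ t ∈ Icc 0 T, u t = l - ∫ s in (0:ℝ)..t, φ (u s))
    (hi : IntervalIntegrable (fun s => φ (u s)) volume 0 T) :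
    ContinuousOn u (Icc 0 T) ∧ ∀ t ∈ Ico 0 T, HasDerivWithinAt u (-φ (u t)) (Ici t) t := by
  have hc : ContinuousOn u (Icc 0 T) := by
    have h1 := intervalIntegral.continuousOn_primitive_interval' hi left_mem_uIcc
    rw [uIcc_of_le hT] at h1
    exact (continuousOn_const.sub h1).congr hu
  refine ⟨hc, fun t ht => ?_⟩
  have hc2 : ContinuousOn (fun s => φ (u s)) (Icc 0 T) := hφ.cont.comp hc hu0
  have hmem : Icc 0 T ∈ nhdsWithin t (Ici t) := by
    refine mem_of_superset (Icc_mem_nhdsGE ht.2) (Icc_subset_Icc_left ht.1)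
  have hmem2 : Icc 0 T ∈ nhdsWithin t (Ioi t) := nhdsWithin_mono t Ioi_subset_Ici_self hmem
  have hd : HasDerivWithinAt (fun y => ∫ s in (0:ℝ)..y, φ (u s)) (φ (u t)) (Ici t) t := by
    refine intervalIntegral.integral_hasDerivWithinAt_right (t := Ioi t) ?_ ?_ ?_
    · exact hi.mono_set (by rw [uIcc_of_le ht.1, uIcc_of_le hT]; exact Icc_subset_Icc_right ht.2.le)
    · exact ⟨Icc 0 T, hmem2, hc2.aestronglyMeasurable measurableSet_Icc⟩
    · exact (hc2 t ⟨ht.1, ht.2.le⟩).mono_of_mem_nhdsWithin hmem2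
  refine (hd.const_sub l).congr_of_eventuallyEq ?_ (hu t ⟨ht.1, ht.2.le⟩)
  filter_upwards [hmem] with y hy using hu y hy

lemma cumulant_integrable {φ : ℝ → ℝ} {v : ℝ → ℝ → ℝ} (hφ : NicePhi φ) (hv : IsCumulant φ v)
    {l : ℝ} (hl : 0 ≤ l) {T : ℝ} (hT : 0 ≤ T) :
    IntervalIntegrable (fun s => φ (v s l)) volume 0 T := by
  by_contra hn
  set I : Set ℝ := {t | 0 ≤ t ∧ IntervalIntegrable (fun s => φ (v s l)) volume 0 t} with hI
  have mono : ∀ a b, 0 ≤ a → a ≤ b → b ∈ I → a ∈ I := by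
    intro a b ha hab hb
    refine ⟨ha, hb.2.mono_set ?_⟩
    rw [uIcc_of_le ha, uIcc_of_le hb.1]; exact Icc_subset_Icc_right hab
  have hbd : ∀ t ∈ I, t ≤ T := by
    intro t ht
    by_contra hlt
    exact hn (mono T t hT (by linarith) ht).2
  have h0 : (0:ℝ) ∈ I := ⟨le_rfl, by simp⟩
  have hBdd : BddAbove I := ⟨T, hbd⟩
  set t0 := sSup I with ht0
  have ht00 : 0 ≤ t0 := le_csSup hBdd h0
  have ht0T : t0 ≤ T := csSup_le ⟨0, h0⟩ hbd
  have below : ∀ t, 0 ≤ t → t < t0 → t ∈ I := by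
    intro t ht htt
    obtain ⟨b, hb, htb⟩ := exists_lt_of_lt_csSup ⟨0, h0⟩ htt
    exact mono t b ht htb.le hb
  have above : ∀ t, t0 < t → v t l = l := by
    intro t htt
    have hnot : ¬ IntervalIntegrable (fun s => φ (v s l)) volume 0 t := by
      intro h
      have := le_csSup hBdd (show t ∈ I from ⟨by linarith, h⟩)
      linarith
    have := (hv l hl t (by linarith)).2
    rwa [intervalIntegral.integral_undef hnot, sub_zero] at this
  have reg : ∀ t, 0 ≤ t → t < t0 → ContinuousOn (fun s => v s l) (Icc 0 t) ∧
      ∀ s ∈ Ico 0 t, HasDerivWithinAt (fun s => v s l) (-φ (v s l)) (Ici s) s := by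
    intro t ht htt
    exact sol_reg hφ ht (fun s hs => (hv l hl s hs.1).1) (fun s hs => (hv l hl s hs.1).2)
      (below t ht htt).2
  obtain ⟨C, hC⟩ := hφ.low
  have hv0 : v 0 l = l := by simpa using (hv l hl 0 le_rfl).2
  have hbound : ∃ B, ∀ t ∈ Ico 0 t0, v t l ≤ B := by
    have hcont : Continuous (fun t => gronwallBound l C 0 t) := by
      simp only [gronwallBound_ε0]
      fun_prop
    obtain ⟨B, hB⟩ := (isCompact_Icc (a := (0:ℝ)) (b := t0)).bddAbove_image hcont.continuousOn
    refine ⟨B, fun t ht => ?_⟩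
    have h1 := gron (reg t ht.1 ht.2).1 (reg t ht.1 ht.2).2 hv0.le (K := C) (ε := 0)
      (fun s hs => by simpa using hC _ (hv l hl s hs.1).1) t ⟨ht.1, le_rfl⟩
    exact h1.trans (hB ⟨t, ⟨ht.1, ht.2.le⟩, rfl⟩)
  obtain ⟨B, hB⟩ := hbound
  have hcon : ContinuousOn (fun s => φ (v s l)) (Ioo 0 t0) := by
    refine hφ.cont.comp (t := Ici 0) ?_ (fun s hs => (hv l hl s hs.1.le).1)
    intro s hs
    obtain ⟨r, hr1, hr2⟩ := exists_between hs.2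
    have h1 := (reg r (hs.1.le.trans hr1.le) hr2).1 s ⟨hs.1.le, hr1.le⟩
    have : Icc 0 r ∈ nhds s := Icc_mem_nhds hs.1 hr1
    exact (h1.continuousAt this).continuousWithinAt
  have int1 : IntegrableOn (fun s => φ (v s l)) (Ioo 0 t0) volume := by
    obtain ⟨M, hM⟩ := (isCompact_Icc (a := (0:ℝ)) (b := B)).exists_bound_of_continuousOn
      (hφ.cont.mono Icc_subset_Ici_self)
    refine ⟨hcon.aestronglyMeasurable measurableSet_Ioo, ?_⟩
    refine HasFiniteIntegral.restrict_of_bounded (C := M) measure_Ioo_lt_top ?_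
    rw [ae_restrict_iff' measurableSet_Ioo]
    exact Eventually.of_forall fun s hs =>
      hM _ ⟨(hv l hl s hs.1.le).1, hB s ⟨hs.1.le, hs.2⟩⟩
  have int2 : IntegrableOn (fun s => φ (v s l)) (Ioc t0 T) volume := by
    have : IntegrableOn (fun _ : ℝ => φ l) (Ioc t0 T) volume :=
      integrableOn_const measure_Ioc_lt_top.ne
    refine this.congr_fun (fun s hs => ?_) measurableSet_Ioc
    simp only [above s hs.1]
  have int3 : IntegrableOn (fun s => φ (v s l)) {t0} volume := by
    rw [integrableOn_singleton_iff]; right; simp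
  apply hn
  rw [intervalIntegrable_iff_integrableOn_Ioc_of_le hT]
  refine ((int1.union int3).union int2).mono_set ?_
  intro s hs
  rcases lt_trichotomy s t0 with h | h | h
  · exact Or.inl (Or.inl ⟨hs.1, h⟩)
  · exact Or.inl (Or.inr h)
  · exact Or.inr ⟨h, hs.2⟩

lemma cumulant_reg {φ : ℝ → ℝ} {v : ℝ → ℝ → ℝ} (hφ : NicePhi φ) (hv : IsCumulant φ v)
    {l : ℝ} (hl : 0 ≤ l) (T : ℝ) (hT : 0 ≤ T) :
    ContinuousOn (fun s => v s l) (Icc 0 T) ∧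
      ∀ s ∈ Ico 0 T, HasDerivWithinAt (fun s => v s l) (-φ (v s l)) (Ici s) s :=
  sol_reg hφ hT (fun s hs => (hv l hl s hs.1).1) (fun s hs => (hv l hl s hs.1).2)
      (cumulant_integrable hφ hv hl hT)

lemma hasDeriv_shift {u : ℝ → ℝ} {d s t : ℝ}
    (h : HasDerivWithinAt u d (Ici (s + t)) (s + t)) :
    HasDerivWithinAt (fun r => u (s + r)) d (Ici t) t := by
  have h1 : HasDerivWithinAt (fun r => s + r) 1 (Ici t) t :=
    ((hasDerivAt_id t).const_add s).hasDerivWithinAt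
  have := HasDerivWithinAt.comp t (h₂ := u) (s' := Ici (s + t)) h h1
    (fun r hr => by simpa using hr)
  simpa [Function.comp_def] using this

lemma cumulant_flow {φ : ℝ → ℝ} {v : ℝ → ℝ → ℝ} (hφ : NicePhi φ) (hv : IsCumulant φ v)
    {l : ℝ} (hl : 0 ≤ l) {s t : ℝ} (hs : 0 ≤ s) (ht : 0 ≤ t) :
    v (s + t) l = v t (v s l) := by
  have hvs := (hv l hl s hs).1
  have r1 := cumulant_reg hφ hv hl (s + t) (by linarith)
  have r2 := cumulant_reg hφ hv hvs t ht
  have c1 : ContinuousOn (fun r => v (s + r) l) (Icc 0 t) := by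
    refine r1.1.comp (f := fun r => s + r) (by fun_prop) ?_
    intro r hr; exact ⟨by linarith [hr.1], by linarith [hr.2]⟩
  obtain ⟨B1, hB1⟩ := (isCompact_Icc (a := (0:ℝ)) (b := t)).bddAbove_image c1
  obtain ⟨B2, hB2⟩ := (isCompact_Icc (a := (0:ℝ)) (b := t)).bddAbove_image r2.1
  obtain ⟨C, hC⟩ := hφ.lipOn (max B1 B2)
  have := ODE_solution_unique_of_mem_Icc_right (v := fun _ y => -φ y)
    (s := fun _ => Icc 0 (max B1 B2)) (K := C) (a := 0) (b := t)
    (f := fun r => v (s + r) l) (g := fun r => v r (v s l))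
    (fun r _ => by
      refine LipschitzOnWith.of_dist_le_mul fun a ha b hb => ?_
      rw [dist_neg_neg]
      exact hC.dist_le_mul a ha b hb)
    c1
    (fun r hr => hasDeriv_shift (u := fun s => v s l)
      (r1.2 (s + r) ⟨by linarith [hr.1], by linarith [hr.2]⟩))
    (fun r hr => ⟨(hv l hl (s + r) (by linarith [hr.1])).1,
      le_max_of_le_left (hB1 ⟨r, ⟨hr.1, hr.2.le⟩, rfl⟩)⟩)
    r2.1 r2.2
    (fun r hr => ⟨(hv _ hvs r hr.1).1,
      le_max_of_le_right (hB2 ⟨r, ⟨hr.1, hr.2.le⟩, rfl⟩)⟩)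
    (by simpa using (hv _ hvs 0 le_rfl).2.symm)
  exact this ⟨ht, le_rfl⟩

lemma laplace_integrable {μ : Measure ℝ} [IsProbabilityMeasure μ] (h : μ (Iio 0) = 0)
    {l : ℝ} (hl : 0 ≤ l) : Integrable (fun y => Real.exp (-(l * y))) μ := by
  refine Integrable.mono' (integrable_const (1:ℝ)) (by fun_prop) ?_
  have : ∀ᵐ y ∂μ, 0 ≤ y := by
    rw [ae_iff]; simpa [Iio] using h
  filter_upwards [this] with y hy
  rw [Real.norm_eq_abs, abs_of_pos (Real.exp_pos _), Real.exp_le_one_iff]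
  nlinarith

lemma laplace_deriv {μ : Measure ℝ} [IsProbabilityMeasure μ] (h : μ (Iio 0) = 0)
    {l : ℝ} (hl : 0 < l) :
    HasDerivAt (fun r => ∫ y, Real.exp (-(r * y)) ∂μ) (-∫ y, y * Real.exp (-(l * y)) ∂μ) l ∧
      Integrable (fun y => y * Real.exp (-(l * y))) μ := by
  have hmem : l ∈ interior (ProbabilityTheory.integrableExpSet (fun y : ℝ => -y) μ) := by
    rw [mem_interior_iff_mem_nhds]
    refine mem_of_superset (Ioi_mem_nhds hl) ?_
    intro r hr
    have := laplace_integrable h (le_of_lt hr)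
    simpa [ProbabilityTheory.integrableExpSet] using this
  constructor
  · have := ProbabilityTheory.hasDerivAt_mgf hmem
    unfold ProbabilityTheory.mgf at this
    simpa [integral_neg] using this
  · have := ProbabilityTheory.integrable_pow_mul_exp_of_mem_interior_integrableExpSet hmem 1
    simpa using this

lemma forward_eq {φ : ℝ → ℝ} {v : ℝ → ℝ → ℝ} {Q : ℝ → ℝ → Measure ℝ} (hφ : NicePhi φ)
    (hv : IsCumulant φ v) (hQ : IsCBSemigroup v Q) {x : ℝ} (hx : 0 ≤ x) {l t : ℝ} (hl : 0 < l)
    (ht : 0 ≤ t) :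
    HasDerivWithinAt (fun s => Real.exp (-(x * v s l)))
      (φ l * ∫ y, y * Real.exp (-(l * y)) ∂(Q t x)) (Ici t) t := by
  obtain ⟨hp, h0, hL⟩ := hQ t x ht hx
  have hv0 : v 0 l = l := by simpa using (hv l hl.le 0 le_rfl).2
  have d1 := (laplace_deriv h0 hl).1
  have d2 : HasDerivWithinAt (fun s => v s l) (-φ (v 0 l)) (Ici 0) 0 :=
    (cumulant_reg hφ hv hl.le 1 zero_le_one).2 0 (by simp)
  rw [hv0] at d2
  have d1' : HasDerivAt (fun r => ∫ y, Real.exp (-(r * y)) ∂(Q t x))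
      (-∫ y, y * Real.exp (-(l * y)) ∂(Q t x)) (v 0 l) := by rw [hv0]; exact d1
  have d3 := d1'.comp_hasDerivWithinAt (0:ℝ) d2
  have d4 : HasDerivWithinAt (fun s => Real.exp (-(x * v (t + s) l)))
      (φ l * ∫ y, y * Real.exp (-(l * y)) ∂(Q t x)) (Ici 0) 0 := by
    have e : ∀ s ∈ Ici (0:ℝ), Real.exp (-(x * v (t + s) l)) =
        ((fun r => ∫ y, Real.exp (-(r * y)) ∂(Q t x)) ∘ fun s => v s l) s := by
      intro s hs
      simp only [Function.comp_apply]
      rw [hL _ (hv l hl.le s hs).1, add_comm, cumulant_flow hφ hv hl.le hs ht]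
    refine (d3.congr e (e 0 (by simp))).congr_deriv ?_
    ring
  have := hasDeriv_shift (u := fun s => Real.exp (-(x * v (t + s) l))) (s := -t) (t := t)
    (d := φ l * ∫ y, y * Real.exp (-(l * y)) ∂(Q t x)) (by simpa using d4)
  simpa using this

/-- Compensated jump of `g`. -/
def jmp (g g1 : ℝ → ℝ) (y z : ℝ) : ℝ := g (y + z) - g y - (if z ≤ 1 then z * g1 y else 0)

/-- Generator of the CB-process acting on `g` with derivatives `g1`, `g2`. -/
def Lop (β σ : ℝ) (m : Measure ℝ) (g g1 g2 : ℝ → ℝ) (y : ℝ) : ℝ :=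
  y * (-(β * g1 y) + σ ^ 2 / 2 * g2 y + ∫ z, jmp g g1 y z ∂m)

/-- `g` is twice differentiable with derivatives `g1`, `g2`. -/
structure C2 (g g1 g2 : ℝ → ℝ) : Prop where
  d1 : ∀ y, HasDerivAt g (g1 y) y
  d2 : ∀ y, HasDerivAt g1 (g2 y) y

lemma jmp_small {g g1 g2 : ℝ → ℝ} (hg : C2 g g1 g2) {y z S : ℝ} (hz : 0 ≤ z) (hz1 : z ≤ 1)
    (hS : ∀ w ∈ Icc y (y + z), |g2 w| ≤ S) : |jmp g g1 y z| ≤ S * z ^ 2 := by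
  have hS0 : 0 ≤ S := (abs_nonneg _).trans (hS y ⟨le_rfl, by linarith⟩)
  have ym : y ∈ Icc y (y + z) := ⟨le_rfl, by linarith⟩
  have yzm : y + z ∈ Icc y (y + z) := ⟨by linarith, le_rfl⟩
  have b1 : ∀ w ∈ Icc y (y + z), ‖g1 w - g1 y‖ ≤ S * z := by
    intro w hw
    have := Convex.norm_image_sub_le_of_norm_hasDerivWithin_le
      (fun w _ => (hg.d2 w).hasDerivWithinAt) hS (convex_Icc y (y + z)) ym hw
    refine this.trans (mul_le_mul_of_nonneg_left ?_ hS0)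
    rw [Real.norm_eq_abs, abs_of_nonneg (by linarith [hw.1])]
    linarith [hw.2]
  have d : ∀ w ∈ Icc y (y + z), HasDerivWithinAt (fun w => g w - w * g1 y) (g1 w - g1 y)
      (Icc y (y + z)) w := by
    intro w _
    have h2 : HasDerivAt (fun w => w * g1 y) (g1 y) w := by
      simpa using (hasDerivAt_id' w).mul_const (g1 y)
    exact ((hg.d1 w).fun_sub h2).hasDerivWithinAt
  have := Convex.norm_image_sub_le_of_norm_hasDerivWithin_le d b1 (convex_Icc y (y + z)) ym yzm
  rw [Real.norm_eq_abs, Real.norm_eq_abs, add_sub_cancel_left, abs_of_nonneg hz] at this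
  unfold jmp
  rw [if_pos hz1]
  calc _ = |g (y + z) - (y + z) * g1 y - (g y - y * g1 y)| := by congr 1; ring
    _ ≤ _ := this
    _ = _ := by ring

lemma jmp_large {g g1 g2 : ℝ → ℝ} (hg : C2 g g1 g2) {y z S : ℝ} (hz1 : 1 < z)
    (hS : ∀ w ∈ Icc y (y + z), |g1 w| ≤ S) : |jmp g g1 y z| ≤ S * z := by
  have ym : y ∈ Icc y (y + z) := ⟨le_rfl, by linarith⟩
  have yzm : y + z ∈ Icc y (y + z) := ⟨by linarith, le_rfl⟩
  have := Convex.norm_image_sub_le_of_norm_hasDerivWithin_le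
      (fun w _ => (hg.d1 w).hasDerivWithinAt) hS (convex_Icc y (y + z)) ym yzm
  rw [Real.norm_eq_abs, Real.norm_eq_abs, add_sub_cancel_left,
    abs_of_nonneg (by linarith : (0:ℝ) ≤ z)] at this
  unfold jmp
  rw [if_neg (by linarith), sub_zero]
  exact this

lemma jmp_bound {g g1 g2 : ℝ → ℝ} (hg : C2 g g1 g2) {m : Measure ℝ} {ρ : ℝ → ℝ}
    (h : GoodWeight m ρ) {y z S : ℝ} (hz : 0 < z)
    (hS1 : ∀ w, y ≤ w → |g1 w| ≤ S) (hS2 : ∀ w, y ≤ w → |g2 w| ≤ S) :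
    |jmp g g1 y z| ≤ S * ρ z := by
  have hS0 : 0 ≤ S := (abs_nonneg _).trans (hS1 y le_rfl)
  by_cases hz1 : z ≤ 1
  · exact (jmp_small hg hz.le hz1 (fun w hw => hS2 w hw.1)).trans
      (mul_le_mul_of_nonneg_left (h.small z hz1) hS0)
  · exact (jmp_large hg (not_le.1 hz1) (fun w hw => hS1 w hw.1)).trans
      (mul_le_mul_of_nonneg_left (h.large z (not_le.1 hz1)) hS0)

lemma jmp_measurable {g g1 g2 : ℝ → ℝ} (hg : C2 g g1 g2) (y : ℝ) : Measurable (jmp g g1 y) := by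
  have hc : Continuous g := continuous_iff_continuousAt.2 fun y => (hg.d1 y).continuousAt
  unfold jmp
  refine Measurable.sub ?_ ?_
  · exact Continuous.measurable (by fun_prop)
  · exact Measurable.ite measurableSet_Iic (by fun_prop) (by fun_prop)

lemma jmp_integrable {g g1 g2 : ℝ → ℝ} (hg : C2 g g1 g2) {m : Measure ℝ} {ρ : ℝ → ℝ}
    (h : GoodWeight m ρ) {y S : ℝ}
    (hS1 : ∀ w, y ≤ w → |g1 w| ≤ S) (hS2 : ∀ w, y ≤ w → |g2 w| ≤ S) :
    Integrable (jmp g g1 y) m := by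
  refine Integrable.mono' (h.int.const_mul S) (jmp_measurable hg y).aestronglyMeasurable ?_
  filter_upwards [h.pos] with z hz using jmp_bound hg h hz hS1 hS2

/-- Exponential polynomials. -/
def pol (N : ℝ) (n : ℕ) (c : ℕ → ℝ) (y : ℝ) : ℝ :=
  N + ∑ i ∈ Finset.range n, c i * Real.exp (-(((i:ℝ) + 2) * y))

def pol1 (n : ℕ) (c : ℕ → ℝ) (y : ℝ) : ℝ :=
  ∑ i ∈ Finset.range n, -(c i * ((i:ℝ) + 2) * Real.exp (-(((i:ℝ) + 2) * y)))

def pol2 (n : ℕ) (c : ℕ → ℝ) (y : ℝ) : ℝ :=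
  ∑ i ∈ Finset.range n, c i * ((i:ℝ) + 2) ^ 2 * Real.exp (-(((i:ℝ) + 2) * y))

lemma exp_deriv (a y : ℝ) :
    HasDerivAt (fun y => Real.exp (-(a * y))) (-(a * Real.exp (-(a * y)))) y := by
  have h1 : HasDerivAt (fun y => -(a * y)) (-a) y := by
    simpa using ((hasDerivAt_id' y).const_mul a).fun_neg
  exact h1.exp.congr_deriv (by ring)

lemma pol_C2 (N : ℝ) (n : ℕ) (c : ℕ → ℝ) : C2 (pol N n c) (pol1 n c) (pol2 n c) := by
  constructor
  · intro y
    refine HasDerivAt.const_add N (HasDerivAt.fun_sum fun i _ => ?_)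
    exact ((exp_deriv ((i:ℝ) + 2) y).const_mul (c i)).congr_deriv (by ring)
  · intro y
    refine HasDerivAt.fun_sum fun i _ => ?_
    exact ((exp_deriv ((i:ℝ) + 2) y).const_mul (c i * ((i:ℝ) + 2))).fun_neg.congr_deriv (by ring)

lemma Lop_pol {φ : ℝ → ℝ} {β σ : ℝ} {m : Measure ℝ} {ρ : ℝ → ℝ}
    (hφ : IsBranchingMechanism φ β σ m) (h : GoodWeight m ρ) (N : ℝ) (n : ℕ) (c : ℕ → ℝ) (y : ℝ) :
    Lop β σ m (pol N n c) (pol1 n c) (pol2 n c) y =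
      ∑ i ∈ Finset.range n, c i * (φ ((i:ℝ) + 2) * (y * Real.exp (-(((i:ℝ) + 2) * y)))) := by
  have e : ∀ z, jmp (pol N n c) (pol1 n c) y z =
      ∑ i ∈ Finset.range n, c i * Real.exp (-(((i:ℝ) + 2) * y)) * kern ((i:ℝ) + 2) z := by
    intro z
    unfold jmp pol pol1 kern
    have : (if z ≤ 1 then z * ∑ i ∈ Finset.range n, -(c i * ((i:ℝ) + 2) *
        Real.exp (-(((i:ℝ) + 2) * y))) else 0) = ∑ i ∈ Finset.range n,
        (if z ≤ 1 then z * -(c i * ((i:ℝ) + 2) * Real.exp (-(((i:ℝ) + 2) * y))) else 0) := by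
      split_ifs
      · rw [Finset.mul_sum]
      · simp
    rw [this, add_sub_add_left_eq_sub, ← Finset.sum_sub_distrib, ← Finset.sum_sub_distrib]
    refine Finset.sum_congr rfl fun i _ => ?_
    have e2 : Real.exp (-(((i:ℝ) + 2) * (y + z))) =
        Real.exp (-(((i:ℝ) + 2) * y)) * Real.exp (-(z * ((i:ℝ) + 2))) := by
      rw [← Real.exp_add]; congr 1; ring
    rw [e2]
    split_ifs <;> ring
  unfold Lop
  simp_rw [e]
  rw [integral_finsetSum _ (fun i _ => (kern_integrable h (by positivity)).const_mul _)]
  unfold pol1 pol2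
  rw [Finset.mul_sum, Finset.mul_sum, ← Finset.sum_neg_distrib, ← Finset.sum_add_distrib,
    ← Finset.sum_add_distrib, Finset.mul_sum]
  refine Finset.sum_congr rfl fun i _ => ?_
  rw [integral_const_mul, hφ.form _ (by positivity)]
  unfold kern
  ring

lemma decay {a a' : ℝ → ℝ} (ha : ∀ y, HasDerivAt a (a' y) y)
    (hb : ∀ y, 0 ≤ y → |a' y| ≤ Real.exp (-y)) (hlim : Tendsto a atTop (nhds 0)) :
    ∀ y, 0 ≤ y → |a y| ≤ Real.exp (-y) := by
  have hexp : Tendsto (fun y : ℝ => Real.exp (-y)) atTop (nhds 0) :=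
    Real.tendsto_exp_neg_atTop_nhds_zero
  have key : ∀ (b b' : ℝ → ℝ), (∀ y, HasDerivAt b (b' y) y) →
      (∀ y, 0 ≤ y → |b' y| ≤ Real.exp (-y)) → Tendsto b atTop (nhds 0) →
      ∀ y, 0 ≤ y → b y ≤ Real.exp (-y) := by
    intro b b' hd hb hl y hy
    have hd2 : ∀ y, HasDerivAt (fun y => b y - Real.exp (-y)) (b' y + Real.exp (-y)) y := by
      intro y
      have := (hd y).fun_sub (by simpa using exp_deriv 1 y)
      exact this.congr_deriv (by ring)
    have mono : MonotoneOn (fun y => b y - Real.exp (-y)) (Ici 0) := by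
      refine monotoneOn_of_hasDerivWithinAt_nonneg (convex_Ici 0)
        (fun y _ => (hd2 y).continuousAt.continuousWithinAt)
        (fun y _ => (hd2 y).hasDerivWithinAt) ?_
      intro y hy
      rw [interior_Ici] at hy
      have := neg_abs_le (b' y)
      have := hb y (le_of_lt hy)
      linarith
    have hl2 : Tendsto (fun y => b y - Real.exp (-y)) atTop (nhds 0) := by
      simpa using hl.sub hexp
    have : b y - Real.exp (-y) ≤ 0 := by
      refine ge_of_tendsto hl2 ?_
      filter_upwards [eventually_ge_atTop y] with s hs
      exact mono hy (hy.trans hs) hs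
    linarith
  intro y hy
  rw [abs_le]
  constructor
  · have := key (fun y => -a y) (fun y => -a' y) (fun y => (ha y).fun_neg)
      (fun y hy => by rw [abs_neg]; exact hb y hy) (by simpa using hlim.neg) y hy
    linarith
  · exact key a a' ha hb hlim y hy

lemma tendsto_expsum (n : ℕ) (d : ℕ → ℝ) (k : ℕ → ℝ) (hk : ∀ i, 0 < k i) :
    Tendsto (fun y : ℝ => ∑ i ∈ Finset.range n, d i * Real.exp (-(k i * y))) atTop (nhds 0) := by
  rw [show (0:ℝ) = ∑ i ∈ Finset.range n, d i * 0 by simp]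
  refine tendsto_finsetSum _ fun i _ => Tendsto.const_mul _ ?_
  refine Real.tendsto_exp_neg_atTop_nhds_zero.comp ?_
  exact tendsto_id.const_mul_atTop (hk i)

lemma approx {g g1 g2 : ℝ → ℝ} (hg : C2 g g1 g2) (hc : Continuous g2) {N Y0 : ℝ}
    (h0 : ∀ y, Y0 ≤ y → g y = N) (h1 : ∀ y, Y0 ≤ y → g1 y = 0) (h2 : ∀ y, Y0 ≤ y → g2 y = 0) :
    ∃ (n : ℕ) (c : ℕ → ℝ), ∀ y, 0 ≤ y → |g y - pol N n c y| ≤ Real.exp (-y) ∧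
      |g1 y - pol1 n c y| ≤ Real.exp (-y) ∧ |g2 y - pol2 n c y| ≤ 2 * Real.exp (-y) := by
  have hc1 : Continuous g1 := continuous_iff_continuousAt.2 fun y => (hg.d2 y).continuousAt
  set w : ℝ → ℝ := fun y => (g2 y + g1 y) * Real.exp (2 * y) with hw
  have hwc : Continuous w := by fun_prop
  set δ := Real.exp (-Y0) with hδ
  have hδ0 : 0 < δ := Real.exp_pos _
  have hWc : Continuous (fun u => w (-Real.log (max u δ))) := by
    refine hwc.comp (Continuous.neg (Continuous.log (by fun_prop) ?_))
    intro u; exact (lt_max_of_lt_right hδ0).ne'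
  have hWe : ∀ y, w (-Real.log (max (Real.exp (-y)) δ)) = w y := by
    intro y
    by_cases hy : y ≤ Y0
    · rw [max_eq_left (Real.exp_le_exp.2 (by linarith)), Real.log_exp, neg_neg]
    · rw [max_eq_right (Real.exp_le_exp.2 (by linarith)), Real.log_exp, neg_neg]
      simp only [hw]
      rw [h1 Y0 le_rfl, h2 Y0 le_rfl, h1 y (by linarith), h2 y (by linarith)]
      simp
  obtain ⟨P, hP⟩ := exists_polynomial_near_of_continuousOn 0 1 _ hWc.continuousOn 1 one_pos
  set n := P.natDegree + 1 with hn
  set c : ℕ → ℝ := fun i => P.coeff i / (((i:ℝ) + 1) * ((i:ℝ) + 2)) with hcdef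
  have hC2 := pol_C2 N n c
  have hsum : ∀ y, pol2 n c y + pol1 n c y = Real.exp (-(2 * y)) * P.eval (Real.exp (-y)) := by
    intro y
    rw [Polynomial.eval_eq_sum_range, Finset.mul_sum]
    unfold pol1 pol2
    rw [← Finset.sum_add_distrib]
    refine Finset.sum_congr rfl fun i _ => ?_
    have e : Real.exp (-(((i:ℝ) + 2) * y)) = Real.exp (-(2 * y)) * Real.exp (-y) ^ i := by
      rw [← Real.exp_nat_mul, ← Real.exp_add]; congr 1; ring
    rw [e]
    simp only [hcdef]
    field_simp
    ring
  have hdiff : ∀ y, 0 ≤ y → |(g2 y - pol2 n c y) + (g1 y - pol1 n c y)| ≤ Real.exp (-(2 * y)) := by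
    intro y hy
    have := hP (Real.exp (-y)) ⟨(Real.exp_pos _).le, Real.exp_le_one_iff.2 (by linarith)⟩
    rw [hWe] at this
    have e : (g2 y - pol2 n c y) + (g1 y - pol1 n c y) =
        -(Real.exp (-(2 * y)) * (P.eval (Real.exp (-y)) - w y)) := by
      have e3 : Real.exp (-(2 * y)) * w y = g2 y + g1 y := by
        simp only [hw]
        rw [mul_comm, mul_assoc, ← Real.exp_add]; simp
      rw [mul_sub, e3, ← hsum]; ring
    rw [e, abs_neg, abs_mul, abs_of_pos (Real.exp_pos _)]
    have := Real.exp_pos (-(2 * y))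
    nlinarith
  have hq1 : ∀ y, 0 ≤ y → |Real.exp y * (g1 y - pol1 n c y)| ≤ Real.exp (-y) := by
    refine decay (a' := fun y => Real.exp y * ((g2 y - pol2 n c y) + (g1 y - pol1 n c y))) ?_ ?_ ?_
    · intro y
      exact ((Real.hasDerivAt_exp y).fun_mul ((hg.d2 y).fun_sub (hC2.d2 y))).congr_deriv (by ring)
    · intro y hy
      rw [abs_mul, abs_of_pos (Real.exp_pos _)]
      calc _ ≤ Real.exp y * Real.exp (-(2 * y)) :=
            mul_le_mul_of_nonneg_left (hdiff y hy) (Real.exp_pos _).le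
        _ = _ := by rw [← Real.exp_add]; congr 1; ring
    · refine Tendsto.congr' ?_ (tendsto_expsum n (fun i => c i * ((i:ℝ) + 2)) (fun i => (i:ℝ) + 1)
        (fun i => by positivity))
      filter_upwards [eventually_ge_atTop Y0] with y hy
      rw [h1 y hy, zero_sub]
      unfold pol1
      rw [← Finset.sum_neg_distrib, Finset.mul_sum]
      refine Finset.sum_congr rfl fun i _ => ?_
      have : Real.exp (-(((i:ℝ) + 1) * y)) = Real.exp y * Real.exp (-(((i:ℝ) + 2) * y)) := by
        rw [← Real.exp_add]; congr 1; ring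
      rw [this]; ring
  have hq1' : ∀ y, 0 ≤ y → |g1 y - pol1 n c y| ≤ Real.exp (-y) := by
    intro y hy
    have := hq1 y hy
    rw [abs_mul, abs_of_pos (Real.exp_pos _)] at this
    have h3 := Real.one_le_exp hy
    nlinarith [abs_nonneg (g1 y - pol1 n c y)]
  refine ⟨n, c, fun y hy => ⟨?_, hq1' y hy, ?_⟩⟩
  · refine decay (fun y => (hg.d1 y).fun_sub (hC2.d1 y)) hq1' ?_ y hy
    have := (tendsto_expsum n c (fun i => (i:ℝ) + 2) (fun i => by positivity)).neg
    rw [neg_zero] at this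
    refine Tendsto.congr' ?_ this
    filter_upwards [eventually_ge_atTop Y0] with y hy
    rw [h0 y hy]; unfold pol; ring
  · have e1 := hdiff y hy
    have e2 := hq1' y hy
    have e3 : Real.exp (-(2 * y)) ≤ Real.exp (-y) := Real.exp_le_exp.2 (by linarith)
    have : g2 y - pol2 n c y = ((g2 y - pol2 n c y) + (g1 y - pol1 n c y)) - (g1 y - pol1 n c y) := by
      ring
    rw [this]
    have := abs_sub ((g2 y - pol2 n c y) + (g1 y - pol1 n c y)) (g1 y - pol1 n c y)
    linarith

lemma phi_nice {φ : ℝ → ℝ} {β σ : ℝ} {m : Measure ℝ} {ρ : ℝ → ℝ}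
    (hφ : IsBranchingMechanism φ β σ m) (h : GoodWeight m ρ) : NicePhi φ :=
  ⟨phi_lip hφ h, phi_lower hφ h⟩

lemma bdd_of_evconst {k : ℝ → ℝ} (hk : Continuous k) {Y0 : ℝ} (h : ∀ y, Y0 ≤ y → k y = 0) :
    ∃ S, ∀ y, 0 ≤ y → |k y| ≤ S := by
  obtain ⟨S, hS⟩ := (isCompact_Icc (a := (0:ℝ)) (b := max Y0 0)).exists_bound_of_continuousOn
    hk.continuousOn
  refine ⟨S, fun y hy => ?_⟩
  by_cases hy2 : y ≤ max Y0 0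
  · exact hS y ⟨hy, hy2⟩
  · rw [h y ((le_max_left _ _).trans (not_le.1 hy2).le), abs_zero]
    exact (norm_nonneg _).trans (hS 0 ⟨le_rfl, le_max_right _ _⟩)

lemma main_bound {φ : ℝ → ℝ} {β σ : ℝ} {m : Measure ℝ} {ρ : ℝ → ℝ}
    (hφ : IsBranchingMechanism φ β σ m) (h : GoodWeight m ρ)
    {v : ℝ → ℝ → ℝ} (hv : IsCumulant φ v)
    {Q : ℝ → ℝ → Measure ℝ} (hQ : IsCBSemigroup v Q) {x : ℝ} (hx : 0 ≤ x)
    {g g1 g2 : ℝ → ℝ} (hg : C2 g g1 g2) (hc : Continuous g2) {N Y0 : ℝ}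
    (h0 : ∀ y, Y0 ≤ y → g y = N) (h1 : ∀ y, Y0 ≤ y → g1 y = 0) (h2 : ∀ y, Y0 ≤ y → g2 y = 0)
    {C δ : ℝ} (hC : 0 ≤ C) (hL : ∀ y, 0 ≤ y → Lop β σ m g g1 g2 y ≤ C * g y)
    (hδ : g x + 1 ≤ δ) {t : ℝ} (ht : 0 ≤ t) :
    Integrable g (Q t x) ∧
    ∫ y, g y ∂(Q t x) ≤ 1 + gronwallBound δ C (C + (|β| + σ ^ 2 + 2 * ∫ z, ρ z ∂m)) t := by
  have hnice := phi_nice hφ h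
  have hcg : Continuous g := continuous_iff_continuousAt.2 fun y => (hg.d1 y).continuousAt
  have hc1 : Continuous g1 := continuous_iff_continuousAt.2 fun y => (hg.d2 y).continuousAt
  obtain ⟨n, c, hnc⟩ := approx hg hc h0 h1 h2
  obtain ⟨S1, hS1⟩ := bdd_of_evconst hc1 h1
  obtain ⟨S2, hS2⟩ := bdd_of_evconst hc h2
  set p := pol N n c with hp
  set q := fun y => g y - pol N n c y with hq
  set q1 := fun y => g1 y - pol1 n c y with hq1
  set q2 := fun y => g2 y - pol2 n c y with hq2
  have hqC : C2 q q1 q2 := ⟨fun y => (hg.d1 y).fun_sub ((pol_C2 N n c).d1 y),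
    fun y => (hg.d2 y).fun_sub ((pol_C2 N n c).d2 y)⟩
  have hI := h.integral_nonneg'
  have hLq : ∀ y, 0 ≤ y → Lop β σ m p (pol1 n c) (pol2 n c) y ≤
      C * p y + (C + (|β| + σ ^ 2 + 2 * ∫ z, ρ z ∂m)) := by
    intro y hy
    have qb1 : ∀ w, y ≤ w → |q1 w| ≤ 2 * Real.exp (-y) := fun w hw =>
      (hnc w (hy.trans hw)).2.1.trans (by
        have := Real.exp_le_exp.2 (neg_le_neg hw); have := Real.exp_pos (-y); linarith)
    have qb2 : ∀ w, y ≤ w → |q2 w| ≤ 2 * Real.exp (-y) := fun w hw =>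
      (hnc w (hy.trans hw)).2.2.trans (by
        have := Real.exp_le_exp.2 (neg_le_neg hw); linarith)
    have i1 : Integrable (jmp q q1 y) m := jmp_integrable hqC h qb1 qb2
    have i2 : Integrable (jmp g g1 y) m := jmp_integrable hg h (S := max S1 S2)
      (fun w hw => (hS1 w (hy.trans hw)).trans (le_max_left _ _))
      (fun w hw => (hS2 w (hy.trans hw)).trans (le_max_right _ _))
    have e : Lop β σ m p (pol1 n c) (pol2 n c) y =
        Lop β σ m g g1 g2 y - Lop β σ m q q1 q2 y := by
      have : ∀ z, jmp p (pol1 n c) y z = jmp g g1 y z - jmp q q1 y z := by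
        intro z
        simp only [jmp, hq, hq1, hp]
        split_ifs <;> ring
      unfold Lop
      simp_rw [this]
      rw [integral_sub i2 i1]
      simp only [hq1, hq2]
      ring
    have bq : |Lop β σ m q q1 q2 y| ≤ |β| + σ ^ 2 + 2 * ∫ z, ρ z ∂m := by
      have b3 : |∫ z, jmp q q1 y z ∂m| ≤ 2 * Real.exp (-y) * ∫ z, ρ z ∂m := by
        rw [← integral_const_mul, ← Real.norm_eq_abs]
        refine norm_integral_le_of_norm_le (h.int.const_mul _) ?_
        filter_upwards [h.pos] with z hz using jmp_bound hqC h hz qb1 qb2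
      have b1 : |-(β * q1 y)| ≤ |β| * Real.exp (-y) := by
        rw [abs_neg, abs_mul]
        exact mul_le_mul_of_nonneg_left (hnc y hy).2.1 (abs_nonneg _)
      have b2 : |σ ^ 2 / 2 * q2 y| ≤ σ ^ 2 / 2 * (2 * Real.exp (-y)) := by
        rw [abs_mul, abs_of_nonneg (by positivity : 0 ≤ σ ^ 2 / 2)]
        exact mul_le_mul_of_nonneg_left (hnc y hy).2.2 (by positivity)
      unfold Lop
      rw [abs_mul, abs_of_nonneg hy]
      have ye : y * Real.exp (-y) ≤ 1 := by
        have h3 := Real.add_one_le_exp y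
        have h4 : Real.exp y * Real.exp (-y) = 1 := by rw [← Real.exp_add]; simp
        have h5 := Real.exp_pos (-y)
        nlinarith
      have hs := abs_add_three (-(β * q1 y)) (σ ^ 2 / 2 * q2 y) (∫ z, jmp q q1 y z ∂m)
      calc _ ≤ y * (|β| * Real.exp (-y) + σ ^ 2 / 2 * (2 * Real.exp (-y)) +
            2 * Real.exp (-y) * ∫ z, ρ z ∂m) := mul_le_mul_of_nonneg_left (by linarith) hy
        _ = (y * Real.exp (-y)) * (|β| + σ ^ 2 + 2 * ∫ z, ρ z ∂m) := by ring
        _ ≤ 1 * (|β| + σ ^ 2 + 2 * ∫ z, ρ z ∂m) :=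
            mul_le_mul_of_nonneg_right ye (by positivity)
        _ = _ := one_mul _
    have b4 := hL y hy
    have b5 := neg_abs_le (Lop β σ m q q1 q2 y)
    have b6 : g y ≤ p y + 1 := by
      have := (hnc y hy).1
      have h7 := le_abs_self (g y - pol N n c y)
      have : Real.exp (-y) ≤ 1 := Real.exp_le_one_iff.2 (by linarith)
      simp only [hp]; linarith
    have b7 : C * g y ≤ C * (p y + 1) := mul_le_mul_of_nonneg_left b6 hC
    rw [e]; linarith
  set u : ℝ → ℝ := fun s => N + ∑ i ∈ Finset.range n, c i * Real.exp (-(x * v s ((i:ℝ) + 2))) with hu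
  have ae0 : ∀ s, 0 ≤ s → ∀ᵐ y ∂(Q s x), 0 ≤ y := by
    intro s hs
    rw [ae_iff]; simpa [Iio] using (hQ s x hs hx).2.1
  have hpint : ∀ s, 0 ≤ s → Integrable p (Q s x) := by
    intro s hs
    obtain ⟨hpr, hq0, hLap⟩ := hQ s x hs hx
    refine (integrable_const N).add (integrable_finsetSum _ fun i _ => ?_)
    exact (laplace_integrable hq0 (by positivity)).const_mul _
  have hup : ∀ s, 0 ≤ s → u s = ∫ y, p y ∂(Q s x) := by
    intro s hs
    obtain ⟨hpr, hq0, hLap⟩ := hQ s x hs hx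
    simp only [hp, pol, hu]
    rw [integral_add (integrable_const N) (integrable_finsetSum _ fun i _ =>
      (laplace_integrable hq0 (by positivity)).const_mul _),
      integral_finsetSum _ fun i _ => (laplace_integrable hq0 (by positivity)).const_mul _]
    simp only [integral_const, probReal_univ, one_smul, integral_const_mul]
    congr 1
    refine Finset.sum_congr rfl fun i _ => ?_
    rw [hLap _ (by positivity)]
  have hucont : ContinuousOn u (Icc 0 t) := by
    refine continuousOn_const.add (continuousOn_finsetSum _ fun i _ => ?_)
    have := (cumulant_reg hnice hv (l := (i:ℝ) + 2) (by positivity) t ht).1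
    fun_prop
  have hud : ∀ s ∈ Ico 0 t, HasDerivWithinAt u
      (∫ y, Lop β σ m p (pol1 n c) (pol2 n c) y ∂(Q s x)) (Ici s) s := by
    intro s hs
    obtain ⟨hpr, hq0, hLap⟩ := hQ s x hs.1 hx
    have e : ∫ y, Lop β σ m p (pol1 n c) (pol2 n c) y ∂(Q s x) = ∑ i ∈ Finset.range n,
        c i * (φ ((i:ℝ) + 2) * ∫ y, y * Real.exp (-(((i:ℝ) + 2) * y)) ∂(Q s x)) := by
      simp only [hp, Lop_pol hφ h]
      rw [integral_finsetSum _ fun i _ =>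
        ((laplace_deriv hq0 (by positivity)).2.const_mul _).const_mul _]
      simp only [integral_const_mul]
    rw [e]
    refine HasDerivWithinAt.const_add N (HasDerivWithinAt.fun_sum fun i _ => ?_)
    exact (forward_eq hnice hv hQ hx (by positivity) hs.1).const_mul (c i)
  have hle : ∀ s ∈ Ico 0 t, ∫ y, Lop β σ m p (pol1 n c) (pol2 n c) y ∂(Q s x) ≤
      C * u s + (C + (|β| + σ ^ 2 + 2 * ∫ z, ρ z ∂m)) := by
    intro s hs
    obtain ⟨hpr, hq0, hLap⟩ := hQ s x hs.1 hx
    have e : C * u s + (C + (|β| + σ ^ 2 + 2 * ∫ z, ρ z ∂m)) =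
        ∫ y, (C * p y + (C + (|β| + σ ^ 2 + 2 * ∫ z, ρ z ∂m))) ∂(Q s x) := by
      rw [integral_add ((hpint s hs.1).const_mul C) (integrable_const _), integral_const_mul,
        hup s hs.1]
      simp
    rw [e]
    refine integral_mono_ae ?_ (((hpint s hs.1).const_mul C).add (integrable_const _)) ?_
    · rw [show Lop β σ m p (pol1 n c) (pol2 n c) = fun y => _ from
        funext fun y => Lop_pol hφ h N n c y]
      exact integrable_finsetSum _ fun i _ =>
        ((laplace_deriv hq0 (by positivity)).2.const_mul _).const_mul _
    · filter_upwards [ae0 s hs.1] with y hy using hLq y hy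
  have hgp : ∀ y, 0 ≤ y → |g y - p y| ≤ 1 := fun y hy =>
    (hnc y hy).1.trans (Real.exp_le_one_iff.2 (by linarith))
  have hu0 : u 0 ≤ δ := by
    have : u 0 = p x := by
      simp only [hu, hp, pol]
      congr 1
      refine Finset.sum_congr rfl fun i _ => ?_
      have : v 0 ((i:ℝ) + 2) = (i:ℝ) + 2 := by simpa using (hv ((i:ℝ) + 2) (by positivity) 0 le_rfl).2
      rw [this, mul_comm x]
    rw [this]
    have := (abs_le.1 (hgp x hx)).1
    linarith
  have hfin := gron hucont hud hu0 hle t ⟨ht, le_rfl⟩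
  obtain ⟨hpr, hq0, hLap⟩ := hQ t x ht hx
  have hp1 : Integrable (fun y => 1 + p y) (Q t x) := (integrable_const 1).add (hpint t ht)
  have hgint : Integrable g (Q t x) := by
    have : Integrable (fun y => g y - p y) (Q t x) := by
      refine Integrable.mono' (integrable_const (1:ℝ))
        (hcg.aestronglyMeasurable.sub (hpint t ht).aestronglyMeasurable) ?_
      filter_upwards [ae0 t ht] with y hy using hgp y hy
    refine (this.add (hpint t ht)).congr (Eventually.of_forall fun y => ?_)
    simp
  refine ⟨hgint, ?_⟩
  calc ∫ y, g y ∂(Q t x) ≤ ∫ y, (1 + p y) ∂(Q t x) := by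
        refine integral_mono_ae hgint hp1 ?_
        filter_upwards [ae0 t ht] with y hy
        have := (abs_le.1 (hgp y hy)).2
        linarith
    _ = 1 + u t := by
        rw [integral_add (integrable_const 1) (hpint t ht), hup t ht]; simp
    _ ≤ _ := by linarith

lemma step_bound {k k' : ℝ → ℝ} (hk : ∀ y, HasDerivAt k (k' y) y) {y a b : ℝ}
    (hb : ∀ w ∈ Icc y (y + 1), a ≤ k' w ∧ k' w ≤ b) : a ≤ k (y + 1) - k y ∧ k (y + 1) - k y ≤ b := by
  obtain ⟨w, hw, e⟩ := exists_hasDerivAt_eq_slope k k' (show y < y + 1 by linarith)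
    (fun w _ => (hk w).continuousAt.continuousWithinAt) (fun w _ => hk w)
  rw [add_sub_cancel_left, div_one] at e
  rw [← e]
  exact hb w ⟨hw.1.le, hw.2.le⟩

/-- Smoothing of a continuous monotone function. -/
lemma smoothing {h : ℝ → ℝ} (hc : Continuous h) (hm : Monotone h) :
    ∃ g g1 g2 : ℝ → ℝ, C2 g g1 g2 ∧ Continuous g2 ∧
      (∀ y, h y ≤ g y ∧ g y ≤ h (y + 2)) ∧ (∀ y, |g1 y| ≤ h (y + 2) - h y) ∧
      (∀ y, |g2 y| ≤ h (y + 2) - h y) := by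
  set A : ℝ → ℝ := fun y => ∫ s in (0:ℝ)..y, h s with hA
  have dA : ∀ y, HasDerivAt A (h y) y := fun y => (hc.integral_hasStrictDerivAt 0 y).hasDerivAt
  have hAc : Continuous A := continuous_iff_continuousAt.2 fun y => (dA y).continuousAt
  set B : ℝ → ℝ := fun y => ∫ s in (0:ℝ)..y, A s with hB
  have dB : ∀ y, HasDerivAt B (A y) y := fun y => (hAc.integral_hasStrictDerivAt 0 y).hasDerivAt
  have A1 : ∀ y, h y ≤ A (y + 1) - A y ∧ A (y + 1) - A y ≤ h (y + 1) := fun y =>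
    step_bound dA fun w hw => ⟨hm hw.1, hm hw.2⟩
  have dE : ∀ y, HasDerivAt (fun y => B (y + 1) - B y) (A (y + 1) - A y) y := fun y =>
    ((dB (y + 1)).comp_add_const y 1).fun_sub (dB y)
  have E1 : ∀ y, h y ≤ (B (y + 1 + 1) - B (y + 1)) - (B (y + 1) - B y) ∧
      (B (y + 1 + 1) - B (y + 1)) - (B (y + 1) - B y) ≤ h (y + 1 + 1) := fun y =>
    step_bound dE fun w hw => ⟨(hm hw.1).trans (A1 w).1, (A1 w).2.trans (hm (by linarith [hw.2]))⟩
  have e2 : ∀ y : ℝ, y + 1 + 1 = y + 2 := fun y => by ring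
  refine ⟨fun y => (B (y + 1 + 1) - B (y + 1)) - (B (y + 1) - B y),
    fun y => (A (y + 1 + 1) - A (y + 1)) - (A (y + 1) - A y),
    fun y => (h (y + 1 + 1) - h (y + 1)) - (h (y + 1) - h y), ⟨?_, ?_⟩, by fun_prop, ?_, ?_, ?_⟩
  · intro y
    exact ((dE (y + 1)).comp_add_const y 1).fun_sub (dE y)
  · have dF : ∀ y, HasDerivAt (fun y => A (y + 1) - A y) (h (y + 1) - h y) y := fun y =>
      ((dA (y + 1)).comp_add_const y 1).fun_sub (dA y)
    intro y
    exact ((dF (y + 1)).comp_add_const y 1).fun_sub (dF y)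
  · intro y
    rw [← e2 y]
    exact E1 y
  · intro y
    have a1 := A1 y
    have a2 := A1 (y + 1)
    rw [← e2 y, abs_le]
    have m1 := hm (show y ≤ y + 1 by linarith)
    have m2 := hm (show y + 1 ≤ y + 1 + 1 by linarith)
    constructor <;> linarith [a1.1, a1.2, a2.1, a2.2]
  · intro y
    rw [← e2 y, abs_le]
    have m1 := hm (show y ≤ y + 1 by linarith)
    have m2 := hm (show y + 1 ≤ y + 1 + 1 by linarith)
    constructor <;> linarith

lemma trunc_bound {φ : ℝ → ℝ} {β σ : ℝ} {m : Measure ℝ} {ρ : ℝ → ℝ}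
    (hφ : IsBranchingMechanism φ β σ m) (hρ : GoodWeight m ρ)
    {v : ℝ → ℝ → ℝ} (hv : IsCumulant φ v)
    {Q : ℝ → ℝ → Measure ℝ} (hQ : IsCBSemigroup v Q) {x : ℝ} (hx : 0 ≤ x)
    {h : ℝ → ℝ} (hc : Continuous h) (hm : Monotone h) (hpos : ∀ y, 0 ≤ h y) {D : ℝ} (hD : 1 ≤ D)
    (H1 : ∀ y w, 0 ≤ y → 0 ≤ w → w ≤ 4 + y → (1 + y) * (h (y + w) - h y) ≤ D * w * h y)
    (H2 : ∀ y z, 0 ≤ y → y + 2 < z → y * (h (y + z + 2) - h y) ≤ h y * ρ z)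
    {N Y0 : ℝ} (hN : ∀ y, Y0 ≤ y → h y = N) {δ : ℝ} (hδ : h (x + 2) + 1 ≤ δ) {t : ℝ} (ht : 0 ≤ t) :
    ∫⁻ y, ENNReal.ofReal (h y) ∂(Q t x) ≤ ENNReal.ofReal
      (1 + gronwallBound δ (2 * D * |β| + σ ^ 2 * D + 3 * D * ∫ z, ρ z ∂m)
        ((2 * D * |β| + σ ^ 2 * D + 3 * D * ∫ z, ρ z ∂m) +
          (|β| + σ ^ 2 + 2 * ∫ z, ρ z ∂m)) t) := by
  obtain ⟨g, g1, g2, hg, hg2, b0, b1, b2⟩ := smoothing hc hm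
  have hI := hρ.integral_nonneg'
  have hD0 : 0 ≤ D := by linarith
  have hz : ∀ y, Y0 ≤ y → h (y + 2) - h y = 0 := fun y hy => by
    rw [hN y hy, hN (y + 2) (by linarith), sub_self]
  have g10 : ∀ y, Y0 ≤ y → g1 y = 0 := fun y hy => by
    have := b1 y; rw [hz y hy] at this; exact abs_nonpos_iff.1 this
  have g20 : ∀ y, Y0 ≤ y → g2 y = 0 := fun y hy => by
    have := b2 y; rw [hz y hy] at this; exact abs_nonpos_iff.1 this
  have g00 : ∀ y, Y0 ≤ y → g y = N := fun y hy => by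
    have := b0 y; rw [hN y hy, hN (y + 2) (by linarith)] at this; exact le_antisymm this.2 this.1
  have hcg1 : Continuous g1 := continuous_iff_continuousAt.2 fun y => (hg.d2 y).continuousAt
  obtain ⟨S1, hS1⟩ := bdd_of_evconst hcg1 g10
  obtain ⟨S2, hS2⟩ := bdd_of_evconst hg2 g20
  have hL : ∀ y, 0 ≤ y → Lop β σ m g g1 g2 y ≤
      (2 * D * |β| + σ ^ 2 * D + 3 * D * ∫ z, ρ z ∂m) * g y := by
    intro y hy
    have hinc : ∀ w, 0 ≤ w → w ≤ 4 + y → y * (h (y + w) - h y) ≤ D * w * h y := by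
      intro w hw hw4
      have := H1 y w hy hw hw4
      have := hm (show y ≤ y + w by linarith)
      nlinarith
    have i2 : Integrable (jmp g g1 y) m := jmp_integrable hg hρ (S := max S1 S2)
      (fun w hw => (hS1 w (hy.trans hw)).trans (le_max_left _ _))
      (fun w hw => (hS2 w (hy.trans hw)).trans (le_max_right _ _))
    have j1 : y * |g1 y| ≤ 2 * D * h y := by
      have := mul_le_mul_of_nonneg_left (b1 y) hy
      have := hinc 2 (by norm_num) (by linarith)
      linarith
    have j2 : y * |g2 y| ≤ 2 * D * h y := by
      have := mul_le_mul_of_nonneg_left (b2 y) hy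
      have := hinc 2 (by norm_num) (by linarith)
      linarith
    have hDh : 0 ≤ D * h y := mul_nonneg hD0 (hpos y)
    have j3 : y * ∫ z, jmp g g1 y z ∂m ≤ 3 * D * h y * ∫ z, ρ z ∂m := by
      rw [← integral_const_mul, ← integral_const_mul]
      refine integral_mono_ae (i2.const_mul y) (hρ.int.const_mul _) ?_
      filter_upwards [hρ.pos] with z hz0
      have hr := hρ.nonneg z
      by_cases hz1 : z ≤ 1
      · have k1 := jmp_small hg hz0.le hz1 (y := y) (S := h (y + 3) - h y) (fun w hw =>
          (b2 w).trans (by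
            have := hm (show w + 2 ≤ y + 3 by linarith [hw.2])
            have := hm hw.1
            linarith))
        have k2 := hinc 3 (by norm_num) (by linarith)
        have k3 := hρ.small z hz1
        have k4 := mul_le_mul_of_nonneg_left ((le_abs_self _).trans k1) hy
        calc _ ≤ _ := k4
          _ = (y * (h (y + 3) - h y)) * z ^ 2 := by ring
          _ ≤ (D * 3 * h y) * z ^ 2 := mul_le_mul_of_nonneg_right k2 (sq_nonneg z)
          _ ≤ (D * 3 * h y) * ρ z := mul_le_mul_of_nonneg_left k3 (by linarith)
          _ = _ := by ring
      · have hz1' := not_le.1 hz1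
        have k3 := hρ.large z hz1'
        have k0 : jmp g g1 y z ≤ h (y + z + 2) - h y := by
          unfold jmp
          rw [if_neg hz1, sub_zero]
          linarith [(b0 (y + z)).2, (b0 y).1]
        have k4 := mul_le_mul_of_nonneg_left k0 hy
        by_cases hz2 : z ≤ y + 2
        · have k5 := hinc (z + 2) (by linarith) (by linarith)
          rw [← add_assoc] at k5
          calc _ ≤ _ := k4
            _ ≤ _ := k5
            _ = (D * h y) * (z + 2) := by ring
            _ ≤ (D * h y) * (3 * ρ z) := mul_le_mul_of_nonneg_left (by linarith) hDh
            _ = _ := by ring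
        · have k5 := H2 y z hy (not_le.1 hz2)
          calc _ ≤ _ := k4
            _ ≤ _ := k5
            _ ≤ (3 * (D * h y)) * ρ z := mul_le_mul_of_nonneg_right (by nlinarith [hpos y]) hr
            _ = _ := by ring
    have t1 : y * (-(β * g1 y)) ≤ |β| * (2 * D * h y) := by
      calc y * (-(β * g1 y)) ≤ |y * (-(β * g1 y))| := le_abs_self _
        _ = |β| * (y * |g1 y|) := by
            rw [abs_mul, abs_neg, abs_mul, abs_of_nonneg hy]; ring
        _ ≤ _ := mul_le_mul_of_nonneg_left j1 (abs_nonneg _)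
    have t2 : y * (σ ^ 2 / 2 * g2 y) ≤ σ ^ 2 / 2 * (2 * D * h y) := by
      calc y * (σ ^ 2 / 2 * g2 y) = σ ^ 2 / 2 * (y * g2 y) := by ring
        _ ≤ σ ^ 2 / 2 * (2 * D * h y) := by
            refine mul_le_mul_of_nonneg_left (le_trans ?_ j2) (by positivity)
            exact mul_le_mul_of_nonneg_left (le_abs_self _) hy
    unfold Lop
    calc _ = y * (-(β * g1 y)) + y * (σ ^ 2 / 2 * g2 y) + y * ∫ z, jmp g g1 y z ∂m := by ring
      _ ≤ |β| * (2 * D * h y) + σ ^ 2 / 2 * (2 * D * h y) + 3 * D * h y * ∫ z, ρ z ∂m := by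
          linarith
      _ = (2 * D * |β| + σ ^ 2 * D + 3 * D * ∫ z, ρ z ∂m) * h y := by ring
      _ ≤ _ := mul_le_mul_of_nonneg_left (b0 y).1 (by positivity)
  obtain ⟨hgint, hle⟩ := main_bound hφ hρ hv hQ hx hg hg2 g00 g10 g20 (by positivity) hL
    (δ := δ) (by linarith [(b0 x).2]) ht
  calc ∫⁻ y, ENNReal.ofReal (h y) ∂(Q t x) ≤ ∫⁻ y, ENNReal.ofReal (g y) ∂(Q t x) :=
        lintegral_mono fun y => ENNReal.ofReal_le_ofReal (b0 y).1
    _ = ENNReal.ofReal (∫ y, g y ∂(Q t x)) :=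
        (ofReal_integral_eq_lintegral_ofReal hgint
          (Eventually.of_forall fun y => (hpos y).trans (b0 y).1)).symm
    _ ≤ _ := ENNReal.ofReal_le_ofReal hle


lemma lin_growth {f : ℝ → ℝ} {K : ℝ} (hf : ConditionB f K) {a b : ℝ} (ha : 0 ≤ a) (hab : a < b)
    (hlt : f a < f b) : ∃ c, 0 < c ∧ ∀ y, 0 ≤ y → y ≤ c * f y := by
  obtain ⟨hK, hcv, hmon, hsub, hone⟩ := hf
  have hs : 0 < (f b - f a) / (b - a) := div_pos (by linarith) (by linarith)
  set s := (f b - f a) / (b - a) with hsdef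
  have hb : 0 < b := by linarith
  have hsi : 0 < 1 / s := by positivity
  refine ⟨b + 1 / s, by positivity, fun y hy => ?_⟩
  have h1 := hone y hy
  rcases le_or_gt y b with h | h
  · nlinarith
  · have hsl := hcv.slope_mono_adjacent (mem_Ici.2 ha) (mem_Ici.2 hy) hab h
    rw [← hsdef, le_div_iff₀ (by linarith)] at hsl
    have h2 := hone b hb.le
    have h3 : y - b ≤ 1 / s * f y := by
      rw [one_div, ← div_eq_inv_mul, le_div_iff₀ hs]
      nlinarith
    nlinarith

/-- The shifted version of `f`, extended to all of `ℝ`. -/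
def shf (f : ℝ → ℝ) (y : ℝ) : ℝ := f (1 + max y 0)

lemma shf_of_nonneg {f : ℝ → ℝ} {y : ℝ} (hy : 0 ≤ y) : shf f y = f (1 + y) := by
  unfold shf; rw [max_eq_left hy]

lemma shf_mono {f : ℝ → ℝ} {K : ℝ} (hf : ConditionB f K) : Monotone (shf f) := by
  intro a b hab
  have h0 : ∀ y : ℝ, 0 ≤ max y 0 := fun y => le_max_right _ _
  exact hf.2.2.1 (mem_Ici.2 (by linarith [h0 a])) (mem_Ici.2 (by linarith [h0 b]))
    (by gcongr)

lemma shf_cont {f : ℝ → ℝ} {K : ℝ} (hf : ConditionB f K) : Continuous (shf f) := by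
  have h1 : ContinuousOn f (Ioi 0) :=
    (hf.2.1.subset Ioi_subset_Ici_self (convex_Ioi 0)).continuousOn isOpen_Ioi
  refine h1.comp_continuous (by fun_prop) fun y => ?_
  have : (0:ℝ) ≤ max y 0 := le_max_right _ _
  exact mem_Ioi.2 (by linarith)

lemma shf_one {f : ℝ → ℝ} {K : ℝ} (hf : ConditionB f K) (y : ℝ) : 1 < shf f y := by
  have : (0:ℝ) ≤ max y 0 := le_max_right _ _
  exact hf.2.2.2.2 _ (by linarith)

lemma shf_H1 {f : ℝ → ℝ} {K : ℝ} (hf : ConditionB f K) {y w : ℝ} (hy : 0 ≤ y) (hw : 0 ≤ w)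
    (hw4 : w ≤ 4 + y) : (1 + y) * (shf f (y + w) - shf f y) ≤ K * f 5 * w * shf f y := by
  rw [shf_of_nonneg hy, shf_of_nonneg (add_nonneg hy hw)]
  obtain ⟨hK, hcv, hmon, hsub, hone⟩ := hf
  rcases hw.eq_or_lt with h | h
  · subst h; simp
  have h1 := hcv.secant_mono (a := 1 + y) (x := 1 + (y + w)) (y := 5 + 2 * y)
    (mem_Ici.2 (by linarith)) (mem_Ici.2 (by linarith)) (mem_Ici.2 (by linarith))
    (by intro h; linarith) (by intro h; linarith) (by linarith)
  rw [div_le_div_iff₀ (by linarith) (by linarith)] at h1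
  have h2 : f (5 + 2 * y) ≤ f (5 * (1 + y)) :=
    hmon (mem_Ici.2 (by linarith)) (mem_Ici.2 (by linarith)) (by linarith)
  have h3 := hsub 5 (1 + y) (by norm_num) (by linarith)
  have h4 := hone (1 + y) (by linarith)
  have h5 : f (1 + y) ≤ f (1 + (y + w)) :=
    hmon (mem_Ici.2 (by linarith)) (mem_Ici.2 (by linarith)) (by linarith)
  have h6 : w * (f (5 + 2 * y) - f (1 + y)) ≤ w * (K * f 5 * f (1 + y)) :=
    mul_le_mul_of_nonneg_left (by linarith) hw
  nlinarith

lemma shf_double {f : ℝ → ℝ} {K : ℝ} (hf : ConditionB f K) {z : ℝ} (hz : 0 ≤ z) :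
    shf f (2 * z) ≤ K * f 2 * shf f z := by
  rw [shf_of_nonneg hz, shf_of_nonneg (by linarith)]
  exact (hf.2.2.1 (mem_Ici.2 (by linarith)) (mem_Ici.2 (by linarith)) (by linarith)).trans
    (hf.2.2.2.1 2 (1 + z) (by norm_num) (by linarith))

/-- The weight attached to `f`. -/
def wt (f : ℝ → ℝ) (D : ℝ) (z : ℝ) : ℝ := if z ≤ 1 then z ^ 2 else D * shf f z

lemma wt_good {f : ℝ → ℝ} {K : ℝ} (hf : ConditionB f K) {φ : ℝ → ℝ} {β σ : ℝ} {m : Measure ℝ}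
    (hφ : IsBranchingMechanism φ β σ m)
    (hm : (∫⁻ z in Set.Ioi 1, ENNReal.ofReal (f z) ∂m) < ⊤) {c D : ℝ} (hc : 0 < c)
    (hlin : ∀ y, 0 ≤ y → y ≤ c * f y) (hD : c ≤ D) : GoodWeight m (wt f D) := by
  have hD0 : 0 < D := by linarith
  have hmeas : Measurable (wt f D) :=
    Measurable.ite measurableSet_Iic (by fun_prop) ((shf_mono hf).measurable.const_mul D)
  have hpos : ∀ᵐ z ∂m, 0 < z := by
    rw [ae_iff]; convert hφ.carrier using 2; ext z; simp
  have hnn : ∀ z, 0 ≤ wt f D z := by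
    intro z
    unfold wt
    split_ifs
    · positivity
    · have := shf_one hf z; positivity
  refine ⟨⟨hmeas.aestronglyMeasurable, ?_⟩, hpos, ?_, ?_⟩
  · rw [hasFiniteIntegral_iff_ofReal (ae_of_all _ hnn)]
    rw [← lintegral_add_compl _ (measurableSet_Iic (a := (1:ℝ)))]
    refine ENNReal.add_lt_top.2 ⟨?_, ?_⟩
    · refine lt_of_le_of_lt ?_ hφ.levy_finite
      refine le_trans ?_ (setLIntegral_le_lintegral (Iic (1:ℝ)) _)
      refine lintegral_mono_ae ?_
      filter_upwards [ae_restrict_mem measurableSet_Iic, ae_restrict_of_ae hpos] with z hz hz0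
      have hz1 : z ≤ 1 := hz
      apply ENNReal.ofReal_le_ofReal
      unfold wt
      rw [if_pos hz1]
      exact le_min (by nlinarith) le_rfl
    · rw [compl_Iic]
      have hle : ∫⁻ z in Ioi (1:ℝ), ENNReal.ofReal (wt f D z) ∂m ≤
          ∫⁻ z in Ioi (1:ℝ), ENNReal.ofReal (D * (K * f 2)) * ENNReal.ofReal (f z) ∂m := by
        refine lintegral_mono_ae ?_
        filter_upwards [ae_restrict_mem measurableSet_Ioi] with z hz
        have hz1 : 1 < z := hz
        have h2 := hf.2.2.2.2 2 (by norm_num)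
        have hK := hf.1
        rw [← ENNReal.ofReal_mul (by positivity)]
        apply ENNReal.ofReal_le_ofReal
        unfold wt
        rw [if_neg (not_le.2 hz1), shf_of_nonneg (by linarith), mul_assoc]
        refine mul_le_mul_of_nonneg_left ?_ hD0.le
        exact (hf.2.2.1 (mem_Ici.2 (by linarith)) (mem_Ici.2 (by linarith))
          (by linarith : 1 + z ≤ 2 * z)).trans (hf.2.2.2.1 2 z (by norm_num) (by linarith))
      refine hle.trans_lt ?_
      rw [lintegral_const_mul' _ _ ENNReal.ofReal_ne_top]
      exact ENNReal.mul_lt_top ENNReal.ofReal_lt_top hm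
  · intro z hz
    unfold wt; rw [if_pos hz]
  · intro z hz
    unfold wt; rw [if_neg (not_le.2 hz), shf_of_nonneg (by linarith)]
    have h1 := hlin (1 + z) (by linarith)
    have h2 := hf.2.2.2.2 (1 + z) (by linarith)
    nlinarith

lemma shf_bound {f : ℝ → ℝ} {K : ℝ} (hf : ConditionB f K) {φ : ℝ → ℝ} {β σ : ℝ} {m : Measure ℝ}
    (hφ : IsBranchingMechanism φ β σ m)
    (hm : (∫⁻ z in Set.Ioi 1, ENNReal.ofReal (f z) ∂m) < ⊤) {c : ℝ} (hc : 0 < c)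
    (hlin : ∀ y, 0 ≤ y → y ≤ c * f y)
    {v : ℝ → ℝ → ℝ} (hv : IsCumulant φ v)
    {Q : ℝ → ℝ → Measure ℝ} (hQ : IsCBSemigroup v Q) {x : ℝ} (hx : 0 ≤ x) :
    ∃ δ C ε : ℝ, ∀ t, 0 ≤ t → ∫⁻ y, ENNReal.ofReal (shf f y) ∂(Q t x) ≤
      ENNReal.ofReal (1 + gronwallBound δ C ε t) := by
  have hK := hf.1
  have hf2 := hf.2.2.2.2 2 (by norm_num)
  have hf5 := hf.2.2.2.2 5 (by norm_num)
  have hFm := shf_mono hf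
  have hF1 := shf_one hf
  have hlinF : ∀ y, 0 ≤ y → y ≤ c * shf f y := by
    intro y hy
    rw [shf_of_nonneg hy]
    linarith [hlin (1 + y) (by linarith)]
  have hDc : c ≤ c + c * (K * f 2) := by
    have : 0 < c * (K * f 2) := by positivity
    linarith
  have hρ := wt_good hf hφ hm hc hlin hDc
  set ρ := wt f (c + c * (K * f 2)) with hρdef
  set D := max 1 (K * f 5) with hDdef
  refine ⟨shf f (x + 2) + 1, (2 * D * |β| + σ ^ 2 * D + 3 * D * ∫ z, ρ z ∂m),
    ((2 * D * |β| + σ ^ 2 * D + 3 * D * ∫ z, ρ z ∂m) + (|β| + σ ^ 2 + 2 * ∫ z, ρ z ∂m)),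
    fun t ht => ?_⟩
  have key : ∀ n : ℕ, ∫⁻ y, ENNReal.ofReal (min (shf f y) n) ∂(Q t x) ≤ ENNReal.ofReal
      (1 + gronwallBound (shf f (x + 2) + 1) (2 * D * |β| + σ ^ 2 * D + 3 * D * ∫ z, ρ z ∂m)
        ((2 * D * |β| + σ ^ 2 * D + 3 * D * ∫ z, ρ z ∂m) +
          (|β| + σ ^ 2 + 2 * ∫ z, ρ z ∂m)) t) := fun n => by
    refine trunc_bound hφ hρ hv hQ hx (h := fun y => min (shf f y) n)
      ((shf_cont hf).min continuous_const) (fun a b hab => min_le_min_right _ (hFm hab))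
      (fun y => le_min (by linarith [hF1 y]) (Nat.cast_nonneg n))
      (D := D) (le_max_left _ _) ?_ ?_ (N := n) (Y0 := c * n) ?_
      (δ := shf f (x + 2) + 1) ?_ ht
    · intro y w hy hw hw4
      rcases le_total (n:ℝ) (shf f y) with h | h
      · rw [min_eq_right h, min_eq_right (h.trans (hFm (by linarith))), sub_self, mul_zero]
        positivity
      · rw [min_eq_left h]
        have h1 := shf_H1 hf hy hw hw4
        have h2 : (1 + y) * (min (shf f (y + w)) n - shf f y) ≤
            (1 + y) * (shf f (y + w) - shf f y) :=
          mul_le_mul_of_nonneg_left (by linarith [min_le_left (shf f (y + w)) (n:ℝ)])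
            (by linarith)
        refine h2.trans (h1.trans ?_)
        have := hF1 y
        gcongr
        exact le_max_right _ _
    · intro y z hy hz
      rcases le_total (n:ℝ) (shf f y) with h | h
      · rw [min_eq_right h, min_eq_right (h.trans (hFm (by linarith))), sub_self, mul_zero]
        exact mul_nonneg (Nat.cast_nonneg n) (hρ.nonneg z)
      · rw [min_eq_left h]
        have h1 : min (shf f (y + z + 2)) n - shf f y ≤ K * f 2 * shf f z := by
          have a1 := min_le_left (shf f (y + z + 2)) (n:ℝ)
          have a2 := hFm (show y + z + 2 ≤ 2 * z by linarith)
          have a3 := shf_double hf (show 0 ≤ z by linarith)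
          linarith [hF1 y]
        have hz0 := hF1 z
        have hy0 := hF1 y
        calc y * (min (shf f (y + z + 2)) n - shf f y) ≤ y * (K * f 2 * shf f z) :=
              mul_le_mul_of_nonneg_left h1 hy
          _ ≤ (c * shf f y) * (K * f 2 * shf f z) :=
              mul_le_mul_of_nonneg_right (hlinF y hy) (by positivity)
          _ = shf f y * (c * (K * f 2) * shf f z) := by ring
          _ ≤ shf f y * ((c + c * (K * f 2)) * shf f z) := by gcongr; linarith
          _ = _ := by rw [hρdef]; unfold wt; rw [if_neg (by linarith)]
    · intro y hy
      refine min_eq_right ?_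
      have h0 : 0 ≤ c * (n:ℝ) := by positivity
      have := hlinF y (h0.trans hy)
      exact le_of_mul_le_mul_left (hy.trans this) hc
    · linarith [min_le_left (shf f (x + 2)) (n:ℝ)]
  have htend : Tendsto (fun n : ℕ => ∫⁻ y, ENNReal.ofReal (min (shf f y) n) ∂(Q t x)) atTop
      (nhds (∫⁻ y, ENNReal.ofReal (shf f y) ∂(Q t x))) := by
    refine lintegral_tendsto_of_tendsto_of_monotone (fun n => ?_) (ae_of_all _ fun y => ?_)
      (ae_of_all _ fun y => ?_)
    · exact (ENNReal.measurable_ofReal.comp (hFm.measurable.min measurable_const)).aemeasurable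
    · intro a b hab
      exact ENNReal.ofReal_le_ofReal (min_le_min_left _ (by exact_mod_cast hab))
    · refine tendsto_const_nhds.congr' ?_
      obtain ⟨N, hN⟩ := exists_nat_ge (shf f y)
      filter_upwards [eventually_ge_atTop N] with n hn
      rw [min_eq_left (hN.trans (by exact_mod_cast hn))]
  exact le_of_tendsto' htend key

/-- Proposition 3.9: if `∫_{(1,∞)} f(z) m(dz) < ∞`, then for every `x ≥ 0` the
function `t ↦ ∫ f dQ_t(x,·)` is finite and locally bounded on `[0,∞)`. -/
theorem cb_f_moment_locally_bounded
    (f : ℝ → ℝ) (K : ℝ) (hf : ConditionB f K)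
    (φ : ℝ → ℝ) (β σ : ℝ) (m : Measure ℝ)
    (hφ : IsBranchingMechanism φ β σ m) (hGrey : GreyCondition φ)
    (hm : (∫⁻ z in Set.Ioi 1, ENNReal.ofReal (f z) ∂m) < ⊤)
    (v : ℝ → ℝ → ℝ) (hv : IsCumulant φ v)
    (Q : ℝ → ℝ → Measure ℝ) (hQ : IsCBSemigroup v Q)
    (x : ℝ) (hx : 0 ≤ x) :
    (∀ t, 0 ≤ t → (∫⁻ z, ENNReal.ofReal (f z) ∂(Q t x)) < ⊤) ∧
      ∀ T, 0 < T → ∃ C : ℝ, ∀ t ∈ Set.Icc (0:ℝ) T,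
        (∫⁻ z, ENNReal.ofReal (f z) ∂(Q t x)) ≤ ENNReal.ofReal C := by
  suffices H : ∃ g : ℝ → ℝ, Continuous g ∧ ∀ t, 0 ≤ t →
      ∫⁻ z, ENNReal.ofReal (f z) ∂(Q t x) ≤ ENNReal.ofReal (g t) by
    obtain ⟨g, hg, hb⟩ := H
    refine ⟨fun t ht => (hb t ht).trans_lt ENNReal.ofReal_lt_top, fun T _ => ?_⟩
    obtain ⟨C, hC⟩ := (isCompact_Icc (a := (0:ℝ)) (b := T)).bddAbove_image hg.continuousOn
    exact ⟨C, fun t ht => (hb t ht.1).trans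
      (ENNReal.ofReal_le_ofReal (hC (mem_image_of_mem g ht)))⟩
  have hae : ∀ t, 0 ≤ t → ∀ᵐ y ∂(Q t x), 0 ≤ y := fun t ht => by
    rw [ae_iff]; convert (hQ t x ht hx).2.1 using 2; ext z; simp
  by_cases hne : ∃ b, 0 < b ∧ f 0 < f b
  · obtain ⟨b, hb, hlt⟩ := hne
    obtain ⟨c, hc, hlin⟩ := lin_growth hf le_rfl hb hlt
    obtain ⟨δ, C, ε, hb⟩ := shf_bound hf hφ hm hc hlin hv hQ hx
    refine ⟨fun t => 1 + gronwallBound δ C ε t, continuous_const.add ?_, fun t ht => ?_⟩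
    · exact continuous_iff_continuousAt.2 fun t => (hasDerivAt_gronwallBound δ C ε t).continuousAt
    · refine le_trans (lintegral_mono_ae ?_) (hb t ht)
      filter_upwards [hae t ht] with y hy
      rw [shf_of_nonneg hy]
      exact ENNReal.ofReal_le_ofReal
        (hf.2.2.1 (mem_Ici.2 hy) (mem_Ici.2 (by linarith)) (by linarith))
  · push Not at hne
    refine ⟨fun _ => f 0, continuous_const, fun t ht => ?_⟩
    have := (hQ t x ht hx).1
    calc ∫⁻ z, ENNReal.ofReal (f z) ∂(Q t x) ≤ ∫⁻ _, ENNReal.ofReal (f 0) ∂(Q t x) := by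
          refine lintegral_mono_ae ?_
          filter_upwards [hae t ht] with y hy
          apply ENNReal.ofReal_le_ofReal
          rcases hy.eq_or_lt with h | h
          · rw [← h]
          · exact hne y h
      _ = _ := by simp
end
end
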